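/- arXiv:0907.2730 — 3 statements merged into one kernel-verified Lean document; each statement's English description precedes it below -/
import Mathlib

section
/- Let k ≥ 3 be an integer. The 2-strand braid group of the star graph Y_k, i.e., the fundamental group of the unordered configuration space UC²(Y_k) at any basepoint, is isomorphic to the free group on (k−1)(k−2)/2 generators, FreeGroup (Fin ((k−1)(k−2)/2)). -/
/-- The ordered configuration space of `n` points on `X`. -/
abbrev Conf (n : ℕ) (X : Type*) [TopologicalSpace X] : Type _ :=
  {f : Fin n → X // Function.Injective f}

/-- Two configurations are equivalent iff they differ by a permutation of coordinates. -/
def confSetoid (n : ℕ) (X : Type*) [TopologicalSpace X] : Setoid (Conf n X) where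
  r f g := ∃ σ : Equiv.Perm (Fin n), (f : Fin n → X) = (g : Fin n → X) ∘ σ
  iseqv := by
    refine ⟨fun f => ⟨Equiv.refl _, rfl⟩, ?_, ?_⟩
    · rintro f g ⟨σ, h⟩
      exact ⟨σ.symm, funext fun x => by simp [h, Function.comp]⟩
    · rintro f g h ⟨σ, hfg⟩ ⟨τ, hgh⟩
      exact ⟨σ.trans τ, funext fun x => by simp [hfg, hgh, Function.comp]⟩

/-- The unordered configuration space of `n` points on `X`, with the quotient topology. -/
abbrev UConf (n : ℕ) (X : Type*) [TopologicalSpace X] : Type _ :=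
  Quotient (confSetoid n X)

/-- The star graph `Y_k`: the union of the `k` straight segments in `ℂ` joining `0`
to the `k`-th roots of unity. -/
def starGraph (k : ℕ) : Set ℂ :=
  ⋃ j : Fin k, segment ℝ 0 (Complex.exp (2 * Real.pi * Complex.I * (j : ℕ) / (k : ℕ)))

/-!
For each leg `i` of the star, consider the configurations with a point on leg `i` other than the
center. The outermost point on leg `i` tells the two points apart, and the configuration contracts
by pushing that point to the tip and the other one to the center. Two different legs both carry a
point exactly when each carries one point, which again leaves a contractible set, and two points
cannot lie on three legs. So these sets cover the configuration space, with the complete graph on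
the set of legs as nerve.

Fix a set `U o` of the cover. The fundamental group is generated by the loops going out through
`U i` and back through `U j`, and those with `i = o` or `j = o` are trivial. The remaining edges
of the complete graph are free generators: gluing trivial bundles with fiber the free group along
the edges by left multiplication yields a covering space whose holonomy recovers each word.
-/

open CategoryTheory FundamentalGroupoid Topology

section FundamentalGroupoid

variable {X : Type*} [TopologicalSpace X] {S T : Set X} {x y z : X}

theorem homotopic_of_isSimplyConnected (hS : IsSimplyConnected S) (γ γ' : Path x y)
    (hγ : ∀ t, γ t ∈ S) (hγ' : ∀ t, γ' t ∈ S) : γ.Homotopic γ' := by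
  have := hS.simplyConnectedSpace
  let lift (δ : Path x y) (hδ : ∀ t, δ t ∈ S) :
      Path (⟨x, by simpa using hδ 0⟩ : S) ⟨y, by simpa using hδ 1⟩ :=
    ⟨⟨fun t => ⟨δ t, hδ t⟩, by fun_prop⟩, by simp, by simp⟩
  exact (SimplyConnectedSpace.paths_homotopic (lift γ hγ) (lift γ' hγ')).map
    ⟨_, continuous_subtype_val⟩

/-- The morphism of the fundamental groupoid given by any path inside the simply connected set
`S`; it does not depend on the path, see `pathIn_eq_mk`. -/
noncomputable def pathIn (hS : IsSimplyConnected S) (hx : x ∈ S) (hy : y ∈ S) :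
    FundamentalGroupoid.mk x ⟶ FundamentalGroupoid.mk y :=
  fromPath (.mk (hS.isPathConnected.joinedIn x hx y hy).somePath)

theorem pathIn_eq_mk (hS : IsSimplyConnected S) (γ : Path x y) (hγ : ∀ t, γ t ∈ S)
    (hx : x ∈ S) (hy : y ∈ S) : pathIn hS hx hy = fromPath (.mk γ) :=
  (fromPath_eq_iff_homotopic _ _).2 <|
    homotopic_of_isSimplyConnected hS _ _ (JoinedIn.somePath_mem _) hγ

@[simp]
theorem pathIn_self (hS : IsSimplyConnected S) (hx : x ∈ S) : pathIn hS hx hx = 𝟙 _ :=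
  pathIn_eq_mk hS (.refl x) (fun _ => hx) hx hx

@[simp]
theorem pathIn_comp (hS : IsSimplyConnected S) (hx : x ∈ S) (hy : y ∈ S) (hz : z ∈ S) :
    pathIn hS hx hy ≫ pathIn hS hy hz = pathIn hS hx hz := by
  let γ := (hS.isPathConnected.joinedIn x hx y hy).somePath
  let γ' := (hS.isPathConnected.joinedIn y hy z hz).somePath
  refine (pathIn_eq_mk hS (γ.trans γ') (fun t => ?_) hx hz).symm
  have ht : γ.trans γ' t ∈ Set.range γ ∪ Set.range γ' := Path.trans_range γ γ' ▸ ⟨t, rfl⟩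
  rcases ht with ⟨s, hs⟩ | ⟨s, hs⟩
  · exact hs ▸ JoinedIn.somePath_mem _ s
  · exact hs ▸ JoinedIn.somePath_mem _ s

theorem pathIn_eq_pathIn (hS : IsSimplyConnected S) (hT : IsSimplyConnected T)
    (hST : IsPathConnected (S ∩ T)) (hx : x ∈ S ∩ T) (hy : y ∈ S ∩ T) :
    pathIn hS hx.1 hy.1 = pathIn hT hx.2 hy.2 := by
  obtain ⟨γ, hγ⟩ := hST.joinedIn x hx y hy
  rw [pathIn_eq_mk hS γ fun t => (hγ t).1, pathIn_eq_mk hT γ fun t => (hγ t).2]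

theorem mk_subpath_comp_mk_subpath (γ : Path x y) (r s t : unitInterval) :
    fromPath (.mk (γ.subpath r s)) ≫ fromPath (.mk (γ.subpath s t)) =
      fromPath (.mk (γ.subpath r t)) :=
  (fromPath_eq_iff_homotopic _ _).2 ⟨Path.Homotopy.subpathTransSubpath γ r s t⟩

theorem morphismProperty_of_isOpen_cover {ι : Type*} {U : ι → Set X} (hU : ∀ i, IsOpen (U i))
    (hcover : ∀ x, ∃ i, x ∈ U i) (P : MorphismProperty (FundamentalGroupoid X))
    [P.IsMultiplicative]
    (hP : ∀ i {x y : X} (γ : Path x y), (∀ t, γ t ∈ U i) → P (fromPath (.mk γ)))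
    {x y : FundamentalGroupoid X} (f : x ⟶ y) : P f := by
  obtain ⟨γ, rfl⟩ := Path.Homotopic.Quotient.mk_surjective f
  obtain ⟨t, t_zero, t_mono, ⟨n, t_eq_one⟩, ht⟩ :=
    exists_monotone_Icc_subset_open_cover_unitInterval (c := fun i => γ ⁻¹' U i)
      (fun i => (hU i).preimage γ.continuous)
      (fun s _ => Set.mem_iUnion.2 (hcover (γ s)))
  have initial (m : ℕ) : P (fromPath (.mk (γ.subpath 0 (t m)))) := by
    induction m with
    | zero => rw [t_zero, Path.subpath_self]; exact P.id_mem _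
    | succ m ih =>
      obtain ⟨i, hi⟩ := ht m
      rw [← mk_subpath_comp_mk_subpath γ 0 (t m) (t (m + 1))]
      refine P.comp_mem _ _ ih (hP i _ fun s => ?_)
      have hs : γ.subpath (t m) (t (m + 1)) s ∈ γ '' Set.Icc (t m) (t (m + 1)) :=
        Path.range_subpath_of_le γ _ _ (t_mono m.le_succ) ▸ ⟨s, rfl⟩
      exact Set.image_subset_iff.2 hi hs
  have whole : P (fromPath (.mk (γ.subpath 0 1))) := t_eq_one n le_rfl ▸ initial n
  rw [Path.subpath_zero_one] at whole
  have cast_iff {a b : X} (ha : a = x.as) (hb : b = y.as) :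
      P (fromPath (.mk (γ.cast ha hb))) ↔ P (fromPath (.mk γ)) := by
    subst ha hb; rfl
  exact (cast_iff _ _).1 whole

end FundamentalGroupoid

section Monodromy

variable {X E F : Type*} [TopologicalSpace X] [TopologicalSpace E] [TopologicalSpace F]

theorem monodromy_mk_preimageSingletonHomeomorph_symm {p : E → X} (cov : IsCoveringMap p)
    (e : Bundle.Trivialization F p) {x y : X} (γ : Path x y) (hγ : ∀ t, γ t ∈ e.baseSet)
    (hx : x ∈ e.baseSet) (hy : y ∈ e.baseSet) (v : F) :
    cov.monodromy (.mk γ) ((e.preimageSingletonHomeomorph hx).symm v) =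
      (e.preimageSingletonHomeomorph hy).symm v := by
  have lift_continuous : Continuous fun t => e.toOpenPartialHomeomorph.symm (γ t, v) :=
    e.toOpenPartialHomeomorph.continuousOn_symm.comp_continuous (by fun_prop)
      fun t => e.mem_target.2 (hγ t)
  let lift : Path ((e.preimageSingletonHomeomorph hx).symm v : E)
      ((e.preimageSingletonHomeomorph hy).symm v) :=
    ⟨⟨_, lift_continuous⟩, by simp [e.preimageSingletonHomeomorph_symm_apply],
      by simp [e.preimageSingletonHomeomorph_symm_apply]⟩
  refine cov.monodromy_eq_of_map_eq (.mk lift) (congrArg Path.Homotopic.Quotient.mk ?_)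
  ext t
  exact e.proj_symm_apply (e.mem_target.2 (hγ t))

theorem localTriv_preimageSingletonHomeomorph_symm_coordChange {ι : Type*}
    (Z : FiberBundleCore ι X F) {i j : ι} {x : X} (hi : x ∈ Z.baseSet i) (hj : x ∈ Z.baseSet j)
    (v : F) :
    ((Z.localTriv j).preimageSingletonHomeomorph hj).symm (Z.coordChange i j x v) =
      ((Z.localTriv i).preimageSingletonHomeomorph hi).symm v := by
  apply Subtype.ext
  exact congrArg (fun w : F => (⟨x, w⟩ : Z.TotalSpace))
    (Z.coordChange_comp i j (Z.indexAt x) x ⟨⟨hi, hj⟩, Z.mem_baseSet_at x⟩ v)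

end Monodromy

section EdgeCocycle

variable {ι : Type*} [LinearOrder ι]

/-- The edges, oriented increasingly, of the complete graph on `ι` that avoid the vertex `o`. -/
abbrev EdgeAvoiding (o : ι) : Type _ := {p : ι × ι // p.1 < p.2 ∧ p.1 ≠ o ∧ p.2 ≠ o}

theorem card_edgeAvoiding [Finite ι] (o : ι) :
    Nat.card (EdgeAvoiding o) = (Nat.card ι - 1).choose 2 := by
  have := Fintype.ofFinite ι
  rw [Nat.card_eq_fintype_card, Nat.card_eq_fintype_card, Fintype.card_subtype,
    ← Finset.card_univ, ← Finset.card_erase_of_mem (Finset.mem_univ o),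
    ← Finset.card_product_filter_lt]
  congr 1
  ext p
  simp [and_comm]

/-- The cocycle with values in the free group that sends each oriented edge avoiding `o` to its
generator; the edges at `o` go to `1`. -/
def edgeCocycle (o i j : ι) : FreeGroup (EdgeAvoiding o) :=
  if h : i < j ∧ i ≠ o ∧ j ≠ o then .of ⟨(i, j), h⟩
  else if h : j < i ∧ j ≠ o ∧ i ≠ o then (.of ⟨(j, i), h⟩)⁻¹
  else 1

theorem edgeCocycle_of {o : ι} (e : EdgeAvoiding o) : edgeCocycle o e.1.1 e.1.2 = .of e :=
  dif_pos e.2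

theorem edgeCocycle_self (o i : ι) : edgeCocycle o i i = 1 := by
  simp [edgeCocycle]

theorem edgeCocycle_base (o i : ι) : edgeCocycle o o i = 1 := by
  simp [edgeCocycle]

theorem edgeCocycle_mul_symm (o i j : ι) : edgeCocycle o j i * edgeCocycle o i j = 1 := by
  by_cases hij : i < j ∧ i ≠ o ∧ j ≠ o
  · simp [edgeCocycle, hij, hij.1.not_gt]
  · by_cases hji : j < i ∧ j ≠ o ∧ i ≠ o
    · simp [edgeCocycle, hji, hji.1.not_gt]
    · rw [edgeCocycle, edgeCocycle, dif_neg hij, dif_neg hji, dif_neg hji, dif_neg hij, one_mul]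

end EdgeCocycle

/-- An open cover by simply connected sets any two of which meet in a path connected set and no
three of which meet, so that its nerve is the complete graph on `ι`. -/
structure IsCompleteNerveCover {X ι : Type*} [TopologicalSpace X] (U : ι → Set X) : Prop where
  isOpen (i : ι) : IsOpen (U i)
  exists_mem (x : X) : ∃ i, x ∈ U i
  isSimplyConnected (i : ι) : IsSimplyConnected (U i)
  isPathConnected_inter : Pairwise fun i j => IsPathConnected (U i ∩ U j)
  eq_or_eq_or_eq {i j l : ι} {x : X} (hi : x ∈ U i) (hj : x ∈ U j) (hl : x ∈ U l) :
    i = j ∨ j = l ∨ i = l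

namespace IsCompleteNerveCover

variable {X ι : Type*} [TopologicalSpace X] {U : ι → Set X} {x y : X}

section TransitionLoops

theorem inter_nonempty (hU : IsCompleteNerveCover U) (i j : ι) : (U i ∩ U j).Nonempty := by
  obtain rfl | hij := eq_or_ne i j
  · simpa using (hU.isSimplyConnected i).nonempty
  · exact (hU.isPathConnected_inter hij).nonempty

variable (hU : IsCompleteNerveCover U)

/-- A chosen point of `U i`. -/
noncomputable def center (i : ι) : X := (hU.isSimplyConnected i).nonempty.some

theorem center_mem (i : ι) : hU.center i ∈ U i := Set.Nonempty.some_mem _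

/-- A chosen point of `U i ∩ U j`. -/
noncomputable def meet (i j : ι) : X := (hU.inter_nonempty i j).some

theorem meet_mem (i j : ι) : hU.meet i j ∈ U i ∩ U j := Set.Nonempty.some_mem _

/-- The class of the paths that run inside `U o` from its center into `U i`, and then inside
`U i` to `x`. -/
noncomputable def spoke (o i : ι) (hx : x ∈ U i) :
    FundamentalGroupoid.mk (hU.center o) ⟶ FundamentalGroupoid.mk x :=
  pathIn (hU.isSimplyConnected o) (hU.center_mem o) (hU.meet_mem o i).1 ≫
    pathIn (hU.isSimplyConnected i) (hU.meet_mem o i).2 hx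

theorem spoke_comp_pathIn (o i : ι) (hx : x ∈ U i) (hy : y ∈ U i) :
    hU.spoke o i hx ≫ pathIn (hU.isSimplyConnected i) hx hy = hU.spoke o i hy := by
  rw [spoke, spoke, Category.assoc, pathIn_comp]

theorem spoke_self (o : ι) (hx : x ∈ U o) :
    hU.spoke o o hx = pathIn (hU.isSimplyConnected o) (hU.center_mem o) hx := by
  simp [spoke]

/-- The loop going out from the center of `U o` through `U i` and coming back through `U j`. -/
noncomputable def transitionLoop (o i j : ι) : FundamentalGroup X (hU.center o) :=
  hU.spoke o i (hU.meet_mem i j).1 ≫ inv (hU.spoke o j (hU.meet_mem i j).2)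

theorem transitionLoop_self (o i : ι) : hU.transitionLoop o i i = 1 := by
  rw [transitionLoop, IsIso.hom_inv_id]; rfl

theorem spoke_comp_inv_spoke (o : ι) {i j : ι} (hx : x ∈ U i ∩ U j) :
    hU.spoke o i hx.1 ≫ inv (hU.spoke o j hx.2) = hU.transitionLoop o i j := by
  obtain rfl | hij := eq_or_ne i j
  · exact (IsIso.hom_inv_id _).trans (hU.transitionLoop_self o i).symm
  · have hm := hU.meet_mem i j
    rw [transitionLoop, ← hU.spoke_comp_pathIn o i hm.1 hx.1, ← hU.spoke_comp_pathIn o j hm.2 hx.2,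
      pathIn_eq_pathIn _ (hU.isSimplyConnected j) (hU.isPathConnected_inter hij) hm hx]
    simp

theorem transitionLoop_base (o j : ι) : hU.transitionLoop o o j = 1 := by
  rw [← hU.spoke_comp_inv_spoke o (hU.meet_mem o j), spoke_self, spoke, pathIn_self,
    Category.comp_id]
  exact IsIso.hom_inv_id _

theorem transitionLoop_symm (o i j : ι) :
    hU.transitionLoop o j i = (hU.transitionLoop o i j)⁻¹ := by
  rw [eq_inv_iff_mul_eq_one, ← hU.spoke_comp_inv_spoke o (hU.meet_mem i j),
    ← hU.spoke_comp_inv_spoke o (hU.meet_mem i j).symm, End.mul_def, End.one_def]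
  simp

end TransitionLoops

theorem pathConnectedSpace (hU : IsCompleteNerveCover U) [Nonempty ι] : PathConnectedSpace X := by
  obtain ⟨o⟩ := ‹Nonempty ι›
  have joined_center (x : X) : Joined (hU.center o) x := by
    obtain ⟨i, hi⟩ := hU.exists_mem x
    exact ((hU.isSimplyConnected o).isPathConnected.joinedIn _ (hU.center_mem o) _
      (hU.meet_mem o i).1).joined.trans ((hU.isSimplyConnected i).isPathConnected.joinedIn _
      (hU.meet_mem o i).2 _ hi).joined
  exact ⟨⟨hU.center o⟩, fun x y => (joined_center x).symm.trans (joined_center y)⟩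

section Holonomy

variable {F : Type*} {c : ι → ι → Equiv.Perm F}

/-- The fiber bundle with discrete fiber `F`, trivial over each `U i`, glued by the constant
transition functions `c i j`. As no three of the sets meet, `c` need only satisfy the cocycle
condition on pairs. -/
noncomputable def bundleCore [TopologicalSpace F] [DiscreteTopology F]
    (hU : IsCompleteNerveCover U) (c_self : ∀ i, c i i = 1) (c_mul : ∀ i j, c j i * c i j = 1) :
    FiberBundleCore ι X F where
  baseSet := U
  isOpen_baseSet := hU.isOpen
  indexAt x := (hU.exists_mem x).choose
  mem_baseSet_at x := (hU.exists_mem x).choose_spec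
  coordChange i j _ := c i j
  coordChange_self i _ _ v := by rw [c_self, Equiv.Perm.one_apply]
  continuousOn_coordChange i j :=
    (continuous_of_discreteTopology.comp continuous_snd).continuousOn
  coordChange_comp i j l x hx v := by
    rw [← Equiv.Perm.mul_apply]
    obtain rfl | rfl | rfl := hU.eq_or_eq_or_eq hx.1.1 hx.1.2 hx.2 <;> simp [c_self, c_mul]

/-- `φ` is the holonomy of the covering glued from `c`. -/
theorem exists_holonomy (hU : IsCompleteNerveCover U) (c_self : ∀ i, c i i = 1)
    (c_mul : ∀ i j, c j i * c i j = 1) {o : ι} (c_base : ∀ i, c o i = 1) :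
    ∃ φ : FundamentalGroup X (hU.center o) →* Equiv.Perm F,
      ∀ i j, φ (hU.transitionLoop o i j) = c i j := by
  let : TopologicalSpace F := ⊥
  have : DiscreteTopology F := ⟨rfl⟩
  let Z := hU.bundleCore c_self c_mul
  have cov : IsCoveringMap Z.proj := FiberBundle.isCoveringMap
  let frame (i : ι) {x : X} (hx : x ∈ U i) : F ≃ Z.proj ⁻¹' {x} :=
    ((Z.localTriv i).preimageSingletonHomeomorph hx).symm.toEquiv
  have frame_change {i j : ι} {x : X} (hx : x ∈ U i ∩ U j) (v : F) :
      frame j hx.2 (c i j v) = frame i hx.1 v :=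
    localTriv_preimageSingletonHomeomorph_symm_coordChange Z hx.1 hx.2 v
  have monodromy_pathIn (i : ι) {x y : X} (hx : x ∈ U i) (hy : y ∈ U i) (v : F) :
      cov.monodromy (pathIn (hU.isSimplyConnected i) hx hy) (frame i hx v) = frame i hy v :=
    monodromy_mk_preimageSingletonHomeomorph_symm cov (Z.localTriv i) _
      (JoinedIn.somePath_mem _) hx hy v
  have monodromy_spoke (i : ι) {x : X} (hx : x ∈ U i) (v : F) :
      cov.monodromy (hU.spoke o i hx) (frame o (hU.center_mem o) v) = frame i hx v := by
    rw [spoke, comp_eq, cov.monodromy_trans_apply, monodromy_pathIn,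
      ← frame_change (hU.meet_mem o i), c_base, Equiv.Perm.one_apply, monodromy_pathIn]
  have monodromy_transitionLoop (i j : ι) (v : F) :
      cov.monodromy (hU.transitionLoop o i j) (frame o (hU.center_mem o) v) =
        frame o (hU.center_mem o) (c i j v) := by
    have hm := hU.meet_mem i j
    apply (cov.monodromy_bijective (hU.spoke o j hm.2)).injective
    rw [← cov.monodromy_trans_apply, ← comp_eq, transitionLoop, Category.assoc,
      IsIso.inv_hom_id, Category.comp_id, monodromy_spoke, monodromy_spoke, frame_change hm]
  exact ⟨(frame o (hU.center_mem o)).symm.permCongrHom.toMonoidHom.comp (cov.monodromyPerm _),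
    fun i j => Equiv.ext fun v => (Equiv.symm_apply_eq _).2 (monodromy_transitionLoop i j v)⟩

end Holonomy

section Free

variable [LinearOrder ι]

/-- The homomorphism sending an edge avoiding `o` to its transition loop. -/
noncomputable def edgeLoopHom (hU : IsCompleteNerveCover U) (o : ι) :
    FreeGroup (EdgeAvoiding o) →* FundamentalGroup X (hU.center o) :=
  FreeGroup.lift fun e => hU.transitionLoop o e.1.1 e.1.2

/-- The holonomy of the covering glued from `edgeCocycle` makes the image of a word act by left
multiplication by the word. -/
theorem edgeLoopHom_injective (hU : IsCompleteNerveCover U) (o : ι) :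
    Function.Injective (hU.edgeLoopHom o) := by
  let leftMul := MulAction.toPermHom (FreeGroup (EdgeAvoiding o)) (FreeGroup (EdgeAvoiding o))
  obtain ⟨φ, hφ⟩ := hU.exists_holonomy
    (c := fun i j => leftMul (edgeCocycle o i j)) (o := o)
    (fun i => by rw [edgeCocycle_self, map_one])
    (fun i j => by rw [← map_mul, edgeCocycle_mul_symm, map_one])
    (fun i => by rw [edgeCocycle_base, map_one])
  have comp_eq_leftMul : φ.comp (hU.edgeLoopHom o) = leftMul :=
    FreeGroup.ext_hom _ _ fun e => by
      rw [MonoidHom.comp_apply, edgeLoopHom, FreeGroup.lift_apply_of, hφ, edgeCocycle_of]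
  refine Function.Injective.of_comp (f := φ) ?_
  rw [← MonoidHom.coe_comp, comp_eq_leftMul]
  exact MulAction.toPerm_injective

theorem transitionLoop_mem_range (hU : IsCompleteNerveCover U) (o i j : ι) :
    hU.transitionLoop o i j ∈ (hU.edgeLoopHom o).range := by
  wlog hij : i < j generalizing i j
  · obtain rfl | hji := (not_lt.1 hij).eq_or_lt
    · rw [transitionLoop_self]; exact one_mem _
    · rw [transitionLoop_symm]; exact inv_mem (this j i hji)
  by_cases hi : i = o
  · rw [hi, transitionLoop_base]; exact one_mem _
  by_cases hj : j = o
  · rw [hj, transitionLoop_symm, transitionLoop_base]; exact inv_mem (one_mem _)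
  exact ⟨.of ⟨(i, j), hij, hi, hj⟩, FreeGroup.lift_apply_of⟩

/-- The morphisms that become products of edge loops once their end points are joined to the base
point by spokes. -/
def IsEdgeLoopProduct (hU : IsCompleteNerveCover U) (o : ι) :
    MorphismProperty (FundamentalGroupoid X) := fun x y f =>
  ∀ i j (hi : x.as ∈ U i) (hj : y.as ∈ U j),
    (hU.spoke o i hi ≫ f ≫ inv (hU.spoke o j hj) : FundamentalGroup X (hU.center o)) ∈
      (hU.edgeLoopHom o).range

instance (hU : IsCompleteNerveCover U) (o : ι) : (hU.IsEdgeLoopProduct o).IsMultiplicative where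
  id_mem x i j hi hj := by
    have h := hU.transitionLoop_mem_range o i j
    rw [← hU.spoke_comp_inv_spoke o ⟨hi, hj⟩] at h
    rwa [Category.id_comp]
  comp_mem {x y z} f g hf hg i j hi hj := by
    obtain ⟨l, hl⟩ := hU.exists_mem y.as
    have h := mul_mem (hg l j hl hj) (hf i l hi hl)
    rw [End.mul_def] at h
    simpa using h

theorem edgeLoopHom_surjective (hU : IsCompleteNerveCover U) (o : ι) :
    Function.Surjective (hU.edgeLoopHom o) := by
  intro a
  have h : hU.IsEdgeLoopProduct o a := by
    refine morphismProperty_of_isOpen_cover hU.isOpen hU.exists_mem _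
      (fun l x y γ hγ i j hi hj => ?_) a
    have hx : x ∈ U l := by simpa using hγ 0
    have hy : y ∈ U l := by simpa using hγ 1
    have h := mul_mem (hU.transitionLoop_mem_range o l j) (hU.transitionLoop_mem_range o i l)
    rw [End.mul_def, ← hU.spoke_comp_inv_spoke o ⟨hi, hx⟩, ← hU.spoke_comp_inv_spoke o ⟨hy, hj⟩,
      ← hU.spoke_comp_pathIn o l hx hy, pathIn_eq_mk _ γ hγ] at h
    simpa using h
  have h' := h o o (hU.center_mem o) (hU.center_mem o)
  simpa [spoke_self] using h'

end Free

theorem nonempty_fundamentalGroup_mulEquiv [Finite ι] (hU : IsCompleteNerveCover U) (x : X) :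
    Nonempty (FundamentalGroup X x ≃* FreeGroup (Fin ((Nat.card ι - 1).choose 2))) := by
  obtain ⟨o, -⟩ := hU.exists_mem x
  have : Nonempty ι := ⟨o⟩
  have : PathConnectedSpace X := hU.pathConnectedSpace
  let : LinearOrder ι := IsWellOrder.linearOrder WellOrderingRel
  let toBase := FundamentalGroup.fundamentalGroupMulEquivOfPathConnected x (hU.center o)
  let free := MulEquiv.ofBijective (hU.edgeLoopHom o)
    ⟨hU.edgeLoopHom_injective o, hU.edgeLoopHom_surjective o⟩
  exact ⟨(toBase.trans free.symm).trans (FreeGroup.freeGroupCongr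
    (Finite.equivFinOfCardEq (card_edgeAvoiding o)))⟩

end IsCompleteNerveCover

section Conf

theorem injective_of_zero_ne_one {α : Type*} {p : Fin 2 → α} (h : p 0 ≠ p 1) :
    Function.Injective p := by
  simp [Function.Injective, Fin.forall_fin_two, h, h.symm]

variable {n : ℕ} {X : Type*} [TopologicalSpace X]

/-- The configuration with the points relabelled along `σ`. -/
def Conf.reindex (σ : Equiv.Perm (Fin n)) (f : Conf n X) : Conf n X :=
  ⟨f.1 ∘ σ, f.2.comp σ.injective⟩

theorem Conf.continuous_reindex (σ : Equiv.Perm (Fin n)) :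
    Continuous (Conf.reindex (X := X) σ) := by
  unfold Conf.reindex
  exact (Pi.continuous_precomp' σ).comp continuous_subtype_val |>.subtype_mk _

/-- The unordered configuration underlying an ordered one. -/
def UConf.mk (f : Conf n X) : UConf n X := Quotient.mk _ f

theorem UConf.mk_surjective : Function.Surjective (UConf.mk (n := n) (X := X)) :=
  Quotient.exists_rep

theorem UConf.mk_eq_mk_iff {f g : Conf n X} :
    UConf.mk f = UConf.mk g ↔ ∃ σ, f = Conf.reindex σ g := by
  simp only [Subtype.ext_iff]
  exact Quotient.eq

theorem UConf.mk_reindex (σ : Equiv.Perm (Fin n)) (f : Conf n X) :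
    UConf.mk (Conf.reindex σ f) = UConf.mk f :=
  UConf.mk_eq_mk_iff.2 ⟨σ, rfl⟩

theorem UConf.continuous_mk : Continuous (UConf.mk (n := n) (X := X)) :=
  continuous_quotient_mk'

theorem UConf.isOpenMap_mk : IsOpenMap (UConf.mk (n := n) (X := X)) := by
  intro V hV
  have preimage_image : UConf.mk ⁻¹' (UConf.mk '' V) = ⋃ σ, Conf.reindex σ ⁻¹' V := by
    ext f
    simp only [Set.mem_preimage, Set.mem_image, Set.mem_iUnion]
    constructor
    · rintro ⟨g, hg, hgf⟩
      obtain ⟨σ, rfl⟩ := UConf.mk_eq_mk_iff.1 hgf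
      exact ⟨σ, hg⟩
    · rintro ⟨σ, hσ⟩
      exact ⟨_, hσ, UConf.mk_reindex σ f⟩
  refine isOpen_coinduced.2 (?_ : IsOpen (UConf.mk ⁻¹' (UConf.mk '' V)))
  rw [preimage_image]
  exact isOpen_iUnion fun σ => hV.preimage (Conf.continuous_reindex σ)

theorem UConf.isSimplyConnected_image_mk {W : Set (Conf n X)} (hW : IsOpen W)
    (hWσ : ∀ f ∈ W, ∀ σ, Conf.reindex σ f ∈ W → Conf.reindex σ f = f)
    (hsc : IsSimplyConnected W) : IsSimplyConnected (UConf.mk '' W) := by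
  have mk_injOn : Function.Injective (W.domRestrict UConf.mk) := by
    rintro ⟨f, hf⟩ ⟨g, hg⟩ hfg
    obtain ⟨σ, rfl⟩ := UConf.mk_eq_mk_iff.1 hfg
    exact Subtype.ext (hWσ g hg σ hf)
  have mk_isOpenEmbedding : IsOpenEmbedding (W.domRestrict UConf.mk) :=
    .of_continuous_injective_isOpenMap (UConf.continuous_mk.comp continuous_subtype_val) mk_injOn
      (UConf.isOpenMap_mk.domRestrict hW)
  have hsc_univ : IsSimplyConnected (Set.univ : Set W) :=
    IsEmbedding.subtypeVal.isSimplyConnected_image.1 (by simpa using hsc)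
  rw [← Set.range_domRestrict, ← Set.image_univ]
  exact mk_isOpenEmbedding.isEmbedding.isSimplyConnected_image.2 hsc_univ

variable {E : Type*} [TopologicalSpace E] {s : Set E}

/-- A configuration on `s ⊆ E`, as a tuple of points of `E`. -/
def Conf.coords (f : Conf n s) : Fin n → E := fun m => f.1 m

theorem Conf.injective_coords (f : Conf n s) : Function.Injective f.coords :=
  Subtype.val_injective.comp f.2

theorem Conf.isEmbedding_coords : IsEmbedding (Conf.coords (n := n) (s := s)) :=
  (IsEmbedding.piMap fun _ => IsEmbedding.subtypeVal).comp IsEmbedding.subtypeVal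

theorem Conf.image_coords_preimage {A : Set (Fin n → E)} (hA : ∀ p ∈ A, Function.Injective p) :
    Conf.coords '' (Conf.coords (s := s) ⁻¹' A) = {p | (∀ m, p m ∈ s) ∧ p ∈ A} := by
  ext p
  constructor
  · rintro ⟨f, hf, rfl⟩
    exact ⟨fun m => (f.1 m).2, hf⟩
  · rintro ⟨hps, hpA⟩
    exact ⟨⟨fun m => ⟨p m, hps m⟩, fun _ _ h => hA p hpA (congrArg Subtype.val h)⟩, hpA, rfl⟩

end Conf

section Star

variable {ι E : Type*} [NormedAddCommGroup E] [NormedSpace ℝ E] {u w z : E} {v : ι → E} {i j : ι}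

/-- The star with center `0` and tips `v i`. -/
def starSet (v : ι → E) : Set E := ⋃ i, segment ℝ 0 (v i)

theorem mem_segment_zero_iff : z ∈ segment ℝ 0 w ↔ ∃ r ∈ Set.Icc (0 : ℝ) 1, r • w = z := by
  simp [segment_eq_image]

theorem starConvex_starSet (v : ι → E) : StarConvex ℝ 0 (starSet v) :=
  starConvex_iUnion fun i => (convex_segment 0 (v i)).starConvex (left_mem_segment ℝ 0 (v i))

open Classical in
/-- The distance of `z` from the origin if `z` lies on the ray through `u`, and `0` otherwise. -/
noncomputable def legCoord (u z : E) : ℝ := if SameRay ℝ u z then ‖z‖ else 0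

theorem legCoord_nonneg (u z : E) : 0 ≤ legCoord u z := by
  unfold legCoord
  positivity

theorem legCoord_pos_iff : 0 < legCoord u z ↔ SameRay ℝ u z ∧ z ≠ 0 := by
  unfold legCoord
  split_ifs with h <;> simp [h]

theorem legCoord_self (u : E) : legCoord u u = ‖u‖ := if_pos .rfl

theorem legCoord_smul {r : ℝ} (hr : 0 ≤ r) (u z : E) : legCoord u (r • z) = r * legCoord u z := by
  obtain rfl | hr := hr.eq_or_lt
  · simp [legCoord]
  by_cases h : SameRay ℝ u z
  · rw [legCoord, legCoord, if_pos h, if_pos (h.pos_smul_right hr), norm_smul,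
      Real.norm_of_nonneg hr.le]
  · have h' : ¬SameRay ℝ u (r • z) := fun h' =>
      h (by simpa [smul_smul, hr.ne'] using h'.pos_smul_right (inv_pos.2 hr))
    rw [legCoord, legCoord, if_neg h, if_neg h', mul_zero]

theorem legCoord_combo {a b : ℝ} (ha : 0 ≤ a) (hb : 0 ≤ b) (hu : u ≠ 0) (hz : SameRay ℝ u z)
    (hw : SameRay ℝ u w) :
    legCoord u (a • z + b • w) = a * legCoord u z + b * legCoord u w := by
  have haz : SameRay ℝ u (a • z) := hz.nonneg_smul_right ha
  have hbw : SameRay ℝ u (b • w) := hw.nonneg_smul_right hb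
  rw [← legCoord_smul ha, ← legCoord_smul hb, legCoord, legCoord, legCoord, if_pos haz,
    if_pos hbw, if_pos (haz.add_right hbw), (haz.symm.trans hbw fun h => (hu h).elim).norm_add]

theorem eq_of_legCoord_pos (huw : ‖u‖ = ‖w‖) (hu : 0 < legCoord u z) (hw : 0 < legCoord w z) :
    u = w := by
  rw [legCoord_pos_iff] at hu hw
  exact (hu.1.trans hw.1.symm fun h => (hu.2 h).elim).eq_of_norm_eq huw

theorem eq_of_legCoord_eq (hu : u ≠ 0) (hz : 0 < legCoord u z)
    (hzw : legCoord u z = legCoord u w) : z = w := by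
  have hw := legCoord_pos_iff.1 (hzw ▸ hz)
  have hz := legCoord_pos_iff.1 hz
  rw [legCoord, legCoord, if_pos hz.1, if_pos hw.1] at hzw
  exact (hz.1.symm.trans hw.1 fun h => (hu h).elim).eq_of_norm_eq hzw

theorem continuousOn_legCoord_segment (u w : E) :
    ContinuousOn (legCoord u) (segment ℝ 0 w) := by
  by_cases h : SameRay ℝ u w
  · refine continuous_norm.continuousOn.congr fun z hz => ?_
    obtain ⟨r, hr, rfl⟩ := mem_segment_zero_iff.1 hz
    exact if_pos (h.nonneg_smul_right hr.1)
  · refine continuousOn_const (c := 0) |>.congr fun z hz => ?_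
    obtain ⟨r, hr, rfl⟩ := mem_segment_zero_iff.1 hz
    rw [legCoord_smul hr.1, legCoord, if_neg h, mul_zero]

theorem continuousOn_legCoord_starSet [Finite ι] (u : E) (v : ι → E) :
    ContinuousOn (legCoord u) (starSet v) := by
  refine (locallyFinite_of_finite _).continuousOn_iUnion (fun i => ?_)
    fun i => continuousOn_legCoord_segment u (v i)
  rw [segment_eq_image]
  exact (isCompact_Icc.image (by fun_prop)).isClosed

theorem exists_legCoord_pos (hz : z ∈ starSet v) (hz₀ : z ≠ 0) : ∃ i, 0 < legCoord (v i) z := by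
  obtain ⟨i, hi⟩ := Set.mem_iUnion.1 hz
  obtain ⟨r, hr, rfl⟩ := mem_segment_zero_iff.1 hi
  exact ⟨i, legCoord_pos_iff.2 ⟨SameRay.sameRay_nonneg_smul_right _ hr.1, hz₀⟩⟩

/-- The leg of the star that ends at `v i`, without the center. -/
def leg (v : ι → E) (i : ι) : Set E := {z | z ∈ starSet v ∧ 0 < legCoord (v i) z}

theorem tip_mem_leg (hv : ∀ i, ‖v i‖ = 1) (i : ι) : v i ∈ leg v i :=
  ⟨Set.mem_iUnion.2 ⟨i, right_mem_segment ℝ 0 (v i)⟩, by simp [legCoord_self, hv]⟩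

theorem leg_subset_segment (hv : ∀ i, ‖v i‖ = 1) (i : ι) : leg v i ⊆ segment ℝ 0 (v i) := by
  rintro z ⟨hz, hzi⟩
  obtain ⟨j, hj⟩ := Set.mem_iUnion.1 hz
  obtain ⟨r, hr, rfl⟩ := mem_segment_zero_iff.1 hj
  have same_tip : v i = v j := by
    rw [legCoord_smul hr.1] at hzi
    exact eq_of_legCoord_pos ((hv i).trans (hv j).symm) (pos_of_mul_pos_right hzi hr.1)
      (tip_mem_leg hv j).2
  rwa [same_tip]

theorem convex_leg (hv : ∀ i, ‖v i‖ = 1) (i : ι) : Convex ℝ (leg v i) := by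
  intro z hz w hw a b ha hb hab
  refine ⟨Set.mem_iUnion.2 ⟨i, convex_segment _ _ (leg_subset_segment hv i hz)
    (leg_subset_segment hv i hw) ha hb hab⟩, ?_⟩
  rw [legCoord_combo ha hb (legCoord_pos_iff.1 (tip_mem_leg hv i).2).2 (legCoord_pos_iff.1 hz.2).1
    (legCoord_pos_iff.1 hw.2).1]
  exact convex_Ioi (0 : ℝ) hz.2 hw.2 ha hb hab

end Star

section StarConf

variable {ι E : Type*} [NormedAddCommGroup E] [NormedSpace ℝ E] {v : ι → E} {i j : ι}

/-- The two-point configurations on the star whose first point is farther out on leg `i` than the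
second; the second point may lie on another leg. -/
def outermostFirst (v : ι → E) (i : ι) : Set (Conf 2 (starSet v)) :=
  {f | legCoord (v i) (f.coords 1) < legCoord (v i) (f.coords 0)}

theorem isOpen_outermostFirst [Finite ι] (v : ι → E) (i : ι) : IsOpen (outermostFirst v i) := by
  have continuous_legCoord (m : Fin 2) :
      Continuous fun f : Conf 2 (starSet v) => legCoord (v i) (f.coords m) :=
    (continuousOn_legCoord_starSet (v i) v).comp_continuous
      ((continuous_apply m).comp Conf.isEmbedding_coords.continuous) fun f => (f.1 m).2
  exact isOpen_lt (continuous_legCoord 1) (continuous_legCoord 0)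

theorem image_coords_outermostFirst (v : ι → E) (i : ι) :
    Conf.coords '' outermostFirst v i =
      {p | (∀ m, p m ∈ starSet v) ∧ legCoord (v i) (p 1) < legCoord (v i) (p 0)} :=
  Conf.image_coords_preimage fun p (hp : legCoord (v i) (p 1) < legCoord (v i) (p 0)) =>
    injective_of_zero_ne_one fun h => hp.ne' (congrArg _ h)

theorem starConvex_image_coords_outermostFirst (hv : ∀ i, ‖v i‖ = 1) (i : ι) :
    StarConvex ℝ ![v i, 0] (Conf.coords '' outermostFirst v i) := by
  rw [image_coords_outermostFirst]
  rintro p ⟨hp, hlt⟩ a b ha hb hab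
  have hp₀ : p 0 ∈ leg v i := ⟨hp 0, (legCoord_nonneg _ _).trans_lt hlt⟩
  refine ⟨Fin.forall_fin_two.2
    ⟨(convex_leg hv i (tip_mem_leg hv i) hp₀ ha hb hab).1,
      starConvex_starSet v (hp 1) ha hb hab⟩, ?_⟩
  calc legCoord (v i) (a • 0 + b • p 1)
      = b * legCoord (v i) (p 1) := by rw [smul_zero, zero_add, legCoord_smul hb]
    _ < a + b * legCoord (v i) (p 0) := by
      obtain rfl | hb := hb.eq_or_lt
      · linarith
      · linarith [mul_lt_mul_of_pos_left hlt hb]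
    _ = legCoord (v i) (a • v i + b • p 0) := by
      rw [legCoord_combo ha hb (legCoord_pos_iff.1 (tip_mem_leg hv i).2).2 .rfl
        (legCoord_pos_iff.1 hp₀.2).1, legCoord_self, hv, mul_one]

theorem isSimplyConnected_outermostFirst (hv : ∀ i, ‖v i‖ = 1) (i : ι) :
    IsSimplyConnected (outermostFirst v i) := by
  rw [← Conf.isEmbedding_coords.isSimplyConnected_image]
  have center_mem : ![v i, 0] ∈ Conf.coords '' outermostFirst v i := by
    rw [image_coords_outermostFirst]
    have tip_mem := tip_mem_leg hv i
    have zero_mem : 0 ∈ starSet v := (starConvex_starSet v).mem ⟨_, tip_mem.1⟩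
    have zero_lt : legCoord (v i) 0 < legCoord (v i) (v i) := by
      simpa [legCoord] using tip_mem.2
    exact ⟨Fin.forall_fin_two.2 ⟨tip_mem.1, zero_mem⟩, zero_lt⟩
  have := (starConvex_image_coords_outermostFirst hv i).contractibleSpace ⟨_, center_mem⟩
  exact SimplyConnectedSpace.ofContractible _

/-- The unordered two-point configurations with a point on leg `i`. -/
def legOccupied (v : ι → E) (i : ι) : Set (UConf 2 (starSet v)) :=
  UConf.mk '' {f | ∃ m, f.coords m ∈ leg v i}

theorem mk_mem_legOccupied {f : Conf 2 (starSet v)} :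
    UConf.mk f ∈ legOccupied v i ↔ ∃ m, f.coords m ∈ leg v i := by
  refine ⟨?_, fun h => ⟨f, h, rfl⟩⟩
  rintro ⟨g, ⟨m, hm⟩, hgf⟩
  obtain ⟨σ, rfl⟩ := UConf.mk_eq_mk_iff.1 hgf.symm
  exact ⟨σ.symm m, by simpa [Conf.reindex, Conf.coords] using hm⟩

theorem legOccupied_eq_image_outermostFirst (hv : ∀ i, ‖v i‖ = 1) (i : ι) :
    legOccupied v i = UConf.mk '' outermostFirst v i := by
  apply Set.Subset.antisymm
  · rintro _ ⟨f, ⟨m, hm⟩, rfl⟩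
    obtain hlt | heq | hgt := lt_trichotomy (legCoord (v i) (f.coords 1))
      (legCoord (v i) (f.coords 0))
    · exact ⟨f, hlt, rfl⟩
    · have h₁ : 0 < legCoord (v i) (f.coords 1) := by
        fin_cases m
        exacts [heq ▸ hm.2, hm.2]
      have same_point := eq_of_legCoord_eq (legCoord_pos_iff.1 (tip_mem_leg hv i).2).2 h₁ heq
      exact absurd (f.injective_coords same_point) one_ne_zero
    · exact ⟨f.reindex (Equiv.swap 0 1), hgt, UConf.mk_reindex _ f⟩
  · exact Set.image_mono fun f hf => ⟨0, (f.1 0).2, (legCoord_nonneg _ _).trans_lt hf⟩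

theorem isOpen_legOccupied [Finite ι] (hv : ∀ i, ‖v i‖ = 1) (i : ι) :
    IsOpen (legOccupied v i) := by
  rw [legOccupied_eq_image_outermostFirst hv]
  exact UConf.isOpenMap_mk _ (isOpen_outermostFirst v i)

theorem isSimplyConnected_legOccupied [Finite ι] (hv : ∀ i, ‖v i‖ = 1) (i : ι) :
    IsSimplyConnected (legOccupied v i) := by
  rw [legOccupied_eq_image_outermostFirst hv]
  refine UConf.isSimplyConnected_image_mk (isOpen_outermostFirst v i) (fun f hf σ hσ => ?_)
    (isSimplyConnected_outermostFirst hv i)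
  have one_or_swap : ∀ σ : Equiv.Perm (Fin 2), σ = 1 ∨ σ = Equiv.swap 0 1 := by decide
  obtain rfl | rfl := one_or_swap σ
  · rfl
  · have h_swap : legCoord (v i) (f.coords 0) < legCoord (v i) (f.coords 1) := hσ
    exact (lt_asymm hf h_swap).elim

theorem exists_mem_legOccupied (x : UConf 2 (starSet v)) : ∃ i, x ∈ legOccupied v i := by
  obtain ⟨f, rfl⟩ := UConf.mk_surjective x
  obtain ⟨m, hm⟩ : ∃ m, f.coords m ≠ 0 := by
    by_contra! h
    exact zero_ne_one (f.injective_coords ((h 0).trans (h 1).symm))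
  obtain ⟨i, hi⟩ := exists_legCoord_pos (f.1 m).2 hm
  exact ⟨i, mk_mem_legOccupied.2 ⟨m, (f.1 m).2, hi⟩⟩

theorem eq_of_mem_leg_of_mem_leg (hv : ∀ i, ‖v i‖ = 1) (hinj : Function.Injective v) {z : E}
    (hi : z ∈ leg v i) (hj : z ∈ leg v j) : i = j :=
  hinj (eq_of_legCoord_pos ((hv i).trans (hv j).symm) hi.2 hj.2)

theorem legOccupied_inter_legOccupied (hv : ∀ i, ‖v i‖ = 1) (hinj : Function.Injective v)
    (hij : i ≠ j) : legOccupied v i ∩ legOccupied v j =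
      UConf.mk '' {f | f.coords 0 ∈ leg v i ∧ f.coords 1 ∈ leg v j} := by
  apply Set.Subset.antisymm
  · rintro _ ⟨⟨f, ⟨a, ha⟩, rfl⟩, hj⟩
    obtain ⟨b, hb⟩ := mk_mem_legOccupied.1 hj
    have hab : a ≠ b := by
      rintro rfl
      exact hij (eq_of_mem_leg_of_mem_leg hv hinj ha hb)
    obtain ⟨rfl, rfl⟩ | ⟨rfl, rfl⟩ : a = 0 ∧ b = 1 ∨ a = 1 ∧ b = 0 := by omega
    · exact ⟨f, ⟨ha, hb⟩, rfl⟩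
    · exact ⟨f.reindex (Equiv.swap 0 1), ⟨ha, hb⟩, UConf.mk_reindex _ f⟩
  · rintro _ ⟨f, ⟨hi, hj⟩, rfl⟩
    exact ⟨mk_mem_legOccupied.2 ⟨0, hi⟩, mk_mem_legOccupied.2 ⟨1, hj⟩⟩

theorem isPathConnected_legOccupied_inter (hv : ∀ i, ‖v i‖ = 1) (hinj : Function.Injective v)
    (hij : i ≠ j) : IsPathConnected (legOccupied v i ∩ legOccupied v j) := by
  let legs : Set (Fin 2 → E) := {p | p 0 ∈ leg v i ∧ p 1 ∈ leg v j}
  have legs_convex : Convex ℝ legs := fun p hp q hq a b ha hb hab =>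
    ⟨convex_leg hv i hp.1 hq.1 ha hb hab, convex_leg hv j hp.2 hq.2 ha hb hab⟩
  have image_coords : Conf.coords '' (Conf.coords (s := starSet v) ⁻¹' legs) = legs := by
    rw [Conf.image_coords_preimage fun p hp => injective_of_zero_ne_one fun h =>
      hij (eq_of_mem_leg_of_mem_leg hv hinj hp.1 (h ▸ hp.2))]
    exact Set.ext fun p => and_iff_right_of_imp fun hp => Fin.forall_fin_two.2 ⟨hp.1.1, hp.2.1⟩
  rw [legOccupied_inter_legOccupied hv hinj hij]
  refine IsPathConnected.image (F := Conf.coords ⁻¹' legs) ?_ UConf.continuous_mk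
  rw [Conf.isEmbedding_coords.isInducing.isPathConnected_iff, image_coords]
  exact legs_convex.isPathConnected ⟨![v i, v j], tip_mem_leg hv i, tip_mem_leg hv j⟩

theorem isCompleteNerveCover_legOccupied [Finite ι] (hv : ∀ i, ‖v i‖ = 1)
    (hinj : Function.Injective v) : IsCompleteNerveCover (legOccupied v) where
  isOpen := isOpen_legOccupied hv
  exists_mem := exists_mem_legOccupied
  isSimplyConnected := isSimplyConnected_legOccupied hv
  isPathConnected_inter _ _ := isPathConnected_legOccupied_inter hv hinj
  eq_or_eq_or_eq {i j l x} hi hj hl := by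
    obtain ⟨f, rfl⟩ := UConf.mk_surjective x
    obtain ⟨a, ha⟩ := mk_mem_legOccupied.1 hi
    obtain ⟨b, hb⟩ := mk_mem_legOccupied.1 hj
    obtain ⟨c, hc⟩ := mk_mem_legOccupied.1 hl
    obtain rfl | rfl | rfl : a = b ∨ b = c ∨ a = c := by omega
    · exact .inl (eq_of_mem_leg_of_mem_leg hv hinj ha hb)
    · exact .inr (.inl (eq_of_mem_leg_of_mem_leg hv hinj hb hc))
    · exact .inr (.inr (eq_of_mem_leg_of_mem_leg hv hinj ha hc))

end StarConf

theorem braid_group_star_graph_free_general {ι E : Type*} [Finite ι] [NormedAddCommGroup E]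
    [NormedSpace ℝ E] {v : ι → E} (hv : ∀ i, ‖v i‖ = 1) (hinj : Function.Injective v)
    (x : UConf 2 (starSet v)) :
    Nonempty (FundamentalGroup (UConf 2 (starSet v)) x ≃*
      FreeGroup (Fin ((Nat.card ι - 1).choose 2))) :=
  (isCompleteNerveCover_legOccupied hv hinj).nonempty_fundamentalGroup_mulEquiv x

section RootsOfUnity

/-- The `k`-th roots of unity, as the tips of the star graph `Y_k`. -/
noncomputable def starTip (k : ℕ) (j : Fin k) : ℂ :=
  Complex.exp (2 * Real.pi * Complex.I * (j : ℕ) / (k : ℕ))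

theorem starTip_eq_pow (k : ℕ) (j : Fin k) :
    starTip k j = Complex.exp (2 * Real.pi * Complex.I / k) ^ (j : ℕ) := by
  rw [← Complex.exp_nat_mul, starTip]
  ring_nf

theorem norm_starTip (k : ℕ) (j : Fin k) : ‖starTip k j‖ = 1 := by
  have hk : k ≠ 0 := j.pos.ne'
  rw [starTip_eq_pow, norm_pow, (Complex.isPrimitiveRoot_exp k hk).norm'_eq_one hk, one_pow]

theorem starTip_injective (k : ℕ) : Function.Injective (starTip k) := by
  intro i j hij
  rw [starTip_eq_pow, starTip_eq_pow] at hij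
  exact Fin.ext ((Complex.isPrimitiveRoot_exp k i.pos.ne').pow_inj i.2 j.2 hij)

end RootsOfUnity

/-- The 2-strand braid group of the star graph `Y_k` (`k ≥ 3`) is free of rank
`(k-1)(k-2)/2`. -/
theorem braid_group_star_graph_free (k : ℕ) (hk : 3 ≤ k)
    (x : UConf 2 (starGraph k)) :
    Nonempty (FundamentalGroup (UConf 2 (starGraph k)) x ≃*
      FreeGroup (Fin ((k - 1) * (k - 2) / 2))) := by
  obtain ⟨e⟩ := braid_group_star_graph_free_general (norm_starTip k) (starTip_injective k) x
  rw [Nat.card_fin, Nat.choose_two_right, Nat.sub_sub] at e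
  exact ⟨e⟩
end

section
/- Let k ≥ 3 be an integer. The unordered configuration space UC²(Y_k) of 2 points on the star graph Y_k is homotopy equivalent to the 1-skeleton of the (k−1)-simplex, i.e., to the subset of ℝ^{Fin k} given by the union, over all pairs i < j in Fin k, of the straight segments joining the standard basis vectors e_i and e_j (with the subspace topology). -/
/-- The 1-skeleton of the `(k-1)`-simplex: the union of the straight segments in
`ℝ^{Fin k}` joining distinct standard basis vectors. -/
def simplexOneSkeleton (k : ℕ) : Set (Fin k → ℝ) :=
  ⋃ (i : Fin k) (j : Fin k) (_ : i < j),
    segment ℝ (Pi.single i (1 : ℝ)) (Pi.single j (1 : ℝ))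

/-!
Place the legs of the star on the coordinate axes of `ℝᵏ`. For two points `x ≠ y` of the star let
`u = (x - y) / ‖x - y‖₁`, and move `x` and `y` along straight lines to the positive part `u⁺` and
the negative part `u⁻`. This rule is symmetric in `x` and `y`. Each point stays in its leg, because
`x - y` can be positive only on the leg of `x`, and the points never collide, because their
difference is only rescaled by a positive factor. At the end the points lie on different legs, at
distances from the centre with sum one, and such a configuration is determined by the sum
`u⁺ + u⁻ = |u|` of its points, which can be any point of the 1-skeleton.
-/

open Set Topology
open scoped ContinuousMap

section HomotopyEquivalence

variable {X Z : Type*} [TopologicalSpace X] [TopologicalSpace Z] [T2Space Z]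

/-- The homotopy equivalence given by a continuous map `F` to a Hausdorff space which maps a compact
set `K` bijectively onto its target, when a map into `K` which preserves `F` is homotopic to the
identity. The homotopy inverse is the inverse of `F` on `K`. -/
noncomputable def homotopyEquivOfBijOnCompact (F : C(X, Z)) {K : Set X} (hK : IsCompact K)
    (hF : BijOn F K univ) {ρ : C(X, X)} (hρ : (ContinuousMap.id X).Homotopic ρ)
    (hρK : ∀ x, ρ x ∈ K) (hFρ : ∀ x, F (ρ x) = F x) : X ≃ₕ Z :=
  have : CompactSpace K := isCompact_iff_compactSpace.mp hK
  have bijective : Function.Bijective fun x : K ↦ F x :=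
    ⟨hF.injOn.injective, fun z ↦ by simpa using hF.surjOn (mem_univ z)⟩
  let e : K ≃ₜ Z := Continuous.homeoOfEquivCompactToT2 (f := .ofBijective _ bijective)
    (F.continuous.comp continuous_subtype_val)
  have apply_symm (z : Z) : F (e.symm z) = z := e.apply_symm_apply z
  have symm_apply (x : X) : (e.symm (F x) : X) = ρ x :=
    hF.injOn (e.symm _).2 (hρK x) ((apply_symm _).trans (hFρ x).symm)
  { toFun := F
    invFun := ⟨fun z ↦ e.symm z, continuous_subtype_val.comp e.symm.continuous⟩
    left_inv := by
      convert! hρ.symm using 1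
      exact ContinuousMap.ext symm_apply
    right_inv := by
      convert! ContinuousMap.Homotopic.refl _ using 1
      exact (ContinuousMap.ext apply_symm).symm }

end HomotopyEquivalence

section Configurations

variable {X Y : Type*} [TopologicalSpace X] [TopologicalSpace Y]

/-- The homeomorphism of unordered configuration spaces induced by a homeomorphism. -/
def UConf.congr (n : ℕ) (e : X ≃ₜ Y) : UConf n X ≃ₜ UConf n Y :=
  Homeomorph.Quotient.congr
    (Homeomorph.subtype (Homeomorph.piCongrRight fun _ : Fin n ↦ e) fun _ ↦
      (e.injective.of_comp_iff _).symm)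
    fun _ _ ↦ exists_congr fun _ ↦ e.injective.comp_left.eq_iff.symm

theorem Conf.apply_zero_ne_apply_one (f : Conf 2 X) : f.1 0 ≠ f.1 1 :=
  f.2.ne zero_ne_one

theorem confSetoid_two_iff {f g : Conf 2 X} :
    confSetoid 2 X f g ↔
      f.1 0 = g.1 0 ∧ f.1 1 = g.1 1 ∨ f.1 0 = g.1 1 ∧ f.1 1 = g.1 0 := by
  have perm_fin_two : ∀ σ : Equiv.Perm (Fin 2), σ = 1 ∨ σ = Equiv.swap 0 1 := by decide
  constructor
  · rintro ⟨σ, h⟩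
    rcases perm_fin_two σ with rfl | rfl <;> simp [h]
  · rintro (h | h)
    · exact ⟨1, funext <| Fin.forall_fin_two.mpr h⟩
    · exact ⟨Equiv.swap 0 1, funext <| Fin.forall_fin_two.mpr <| by simpa using h⟩

/-- Move each of two points by a rule `φ` that depends on its own position and on the position of
the other point. -/
def Conf.map₂ (φ : X → X → Y) (hφ : ∀ x y, x ≠ y → φ x y ≠ φ y x) (f : Conf 2 X) : Conf 2 Y :=
  ⟨![φ (f.1 0) (f.1 1), φ (f.1 1) (f.1 0)],
    injective_pair_iff_ne.mpr <| hφ _ _ f.apply_zero_ne_apply_one⟩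

/-- The map induced by `Conf.map₂` on unordered configurations. -/
def UConf.map₂ (φ : X → X → Y) (hφ : ∀ x y, x ≠ y → φ x y ≠ φ y x) : UConf 2 X → UConf 2 Y :=
  Quotient.map (Conf.map₂ φ hφ) fun _ _ h ↦ by
    rcases confSetoid_two_iff.mp h with ⟨h₀, h₁⟩ | ⟨h₀, h₁⟩ <;>
      exact confSetoid_two_iff.mpr (by simp [Conf.map₂, h₀, h₁])

theorem UConf.continuous_map₂ {T : Type*} [TopologicalSpace T] [LocallyCompactSpace T]
    {φ : T → X → X → Y} (hφ : ∀ t x y, x ≠ y → φ t x y ≠ φ t y x)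
    (hφc : ContinuousOn (fun p : T × X × X ↦ φ p.1 p.2.1 p.2.2) {p | p.2.1 ≠ p.2.2}) :
    Continuous fun p : T × UConf 2 X ↦ UConf.map₂ (φ p.1) (hφ p.1) p.2 := by
  refine isQuotientMap_quotient_mk'.continuous_lift_prod_right <|
    continuous_quotient_mk'.comp <| Continuous.subtype_mk (continuous_pi ?_) _
  have continuous_pair {i j : Fin 2} (hij : i ≠ j) :
      Continuous fun p : T × Conf 2 X ↦ φ p.1 (p.2.1 i) (p.2.1 j) :=
    hφc.comp_continuous (f := fun p : T × Conf 2 X ↦ (p.1, p.2.1 i, p.2.1 j))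
      (continuous_fst.prodMk <| ((continuous_apply i).prodMk (continuous_apply j)).comp <|
        continuous_subtype_val.comp continuous_snd)
      fun p ↦ p.2.2.ne hij
  exact Fin.forall_fin_two.mpr ⟨continuous_pair zero_ne_one, continuous_pair one_ne_zero⟩

end Configurations

section UnitAxes

variable {ι : Type*} [DecidableEq ι]

/-- The coordinate model of a star graph with legs indexed by `ι`: the union of the unit segments
on the nonnegative coordinate axes of `ι → ℝ`. -/
def unitAxes (ι : Type*) [DecidableEq ι] : Set (ι → ℝ) :=
  ⋃ i, segment ℝ 0 (Pi.single i 1)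

theorem mem_segment_zero_single {i : ι} {x : ι → ℝ} :
    x ∈ segment ℝ 0 (Pi.single i 1) ↔ x i ∈ Icc 0 1 ∧ ∀ l ≠ i, x l = 0 := by
  rw [segment_eq_image']
  constructor
  · rintro ⟨t, ht, rfl⟩
    exact ⟨by simpa using ht, fun l hl ↦ by simp [hl]⟩
  · rintro ⟨hi, h⟩
    refine ⟨x i, hi, funext fun l ↦ ?_⟩
    by_cases hl : l = i
    · subst hl; simp
    · simp [hl, h l hl]

theorem mem_unitAxes_iff_exists_single {x : ι → ℝ} :
    x ∈ unitAxes ι ↔ ∃ i, ∃ t ∈ Icc (0 : ℝ) 1, Pi.single i t = x := by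
  simp [unitAxes, segment_eq_image', ← Pi.single_smul']

theorem nonneg_of_mem_unitAxes {x : ι → ℝ} (hx : x ∈ unitAxes ι) : 0 ≤ x := by
  obtain ⟨i, t, ht, rfl⟩ := mem_unitAxes_iff_exists_single.mp hx
  exact Pi.single_nonneg.mpr ht.1

theorem eq_zero_or_eq_zero_of_mem_unitAxes {x : ι → ℝ} (hx : x ∈ unitAxes ι) {a b : ι}
    (hab : a ≠ b) : x a = 0 ∨ x b = 0 := by
  obtain ⟨i, t, -, rfl⟩ := mem_unitAxes_iff_exists_single.mp hx
  by_cases ha : a = i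
  · exact .inr (Pi.single_eq_of_ne (ha ▸ hab.symm) _)
  · exact .inl (Pi.single_eq_of_ne ha _)

theorem eq_and_eq_or_eq_and_eq_of_add_eq_add {x y x' y' : ι → ℝ} (hx : x ∈ unitAxes ι)
    (hy : y ∈ unitAxes ι) (hx' : x' ∈ unitAxes ι) (hy' : y' ∈ unitAxes ι) (hxy : x ⊓ y = 0)
    (hxy' : x' ⊓ y' = 0) (h : x + y = x' + y') : x = x' ∧ y = y' ∨ x = y' ∧ y = x' := by
  have eq_zero_or {u v : ι → ℝ} (huv : u ⊓ v = 0) (l : ι) : u l = 0 ∨ v l = 0 :=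
    (min_choice (u l) (v l)).imp (·.symm.trans (congrFun huv l)) (·.symm.trans (congrFun huv l))
  obtain rfl | ne := eq_or_ne x x'
  · exact .inl ⟨rfl, add_left_cancel h⟩
  · obtain ⟨l, hl⟩ := Function.ne_iff.mp ne
    -- At `l` the sum is carried by one point of each pair, the first of one and the second of the
    -- other, and the points which do not carry it vanish there.
    have swapped (m : ι) : x m = y' m ∧ y m = x' m := by
      have hm : x m + y m = x' m + y' m := congrFun h m
      have hl' : x l + y l = x' l + y' l := congrFun h l
      obtain rfl | hml := eq_or_ne m l
      · grind [eq_zero_or hxy m, eq_zero_or hxy' m]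
      · grind [eq_zero_or hxy m, eq_zero_or hxy' m, eq_zero_or hxy l, eq_zero_or hxy' l,
          eq_zero_or_eq_zero_of_mem_unitAxes hx hml, eq_zero_or_eq_zero_of_mem_unitAxes hy hml,
          eq_zero_or_eq_zero_of_mem_unitAxes hx' hml, eq_zero_or_eq_zero_of_mem_unitAxes hy' hml]
    exact .inr ⟨funext fun m ↦ (swapped m).1, funext fun m ↦ (swapped m).2⟩

theorem isCompact_unitAxes [Finite ι] : IsCompact (unitAxes ι) := by
  refine isCompact_iUnion fun i ↦ ?_
  rw [segment_eq_image']
  exact isCompact_Icc.image (by fun_prop)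

instance [Finite ι] : CompactSpace (unitAxes ι) :=
  isCompact_iff_compactSpace.mp isCompact_unitAxes

variable [Fintype ι] {E : Type*} [NormedAddCommGroup E] [NormedSpace ℝ E]

theorem linearCombination_image_unitAxes (v : ι → E) :
    Fintype.linearCombination ℝ v '' unitAxes ι = ⋃ i, segment ℝ 0 (v i) := by
  rw [unitAxes, image_iUnion]
  refine iUnion_congr fun i ↦ ?_
  simpa using image_segment ℝ (Fintype.linearCombination ℝ v).toAffineMap 0 (Pi.single i 1)

theorem injOn_linearCombination_unitAxes {v : ι → E} (hv : Function.Injective v)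
    (hv₁ : ∀ i, ‖v i‖ = 1) : InjOn (Fintype.linearCombination ℝ v) (unitAxes ι) := by
  intro x hx y hy h
  obtain ⟨i, s, hs, rfl⟩ := mem_unitAxes_iff_exists_single.mp hx
  obtain ⟨j, t, ht, rfl⟩ := mem_unitAxes_iff_exists_single.mp hy
  simp only [Fintype.linearCombination_apply_single] at h
  obtain rfl : s = t := by
    simpa [norm_smul, hv₁, abs_of_nonneg hs.1, abs_of_nonneg ht.1] using congrArg norm h
  obtain rfl | hs₀ := eq_or_ne s 0
  · simp
  · rw [hv (smul_right_injective E hs₀ h)]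

/-- Distinct unit vectors span a star homeomorphic to the coordinate model. -/
noncomputable def unitAxesHomeomorph {v : ι → E} (hv : Function.Injective v)
    (hv₁ : ∀ i, ‖v i‖ = 1) : unitAxes ι ≃ₜ (⋃ i, segment ℝ 0 (v i) : Set E) :=
  (Continuous.homeoOfEquivCompactToT2
      (f := Equiv.Set.imageOfInjOn _ _ (injOn_linearCombination_unitAxes hv hv₁)) <|
    .subtype_mk ((Fintype.linearCombination ℝ v).continuous_of_finiteDimensional.comp
      continuous_subtype_val) _).trans
  (.setCongr (linearCombination_image_unitAxes v))

theorem injective_exp_two_pi_mul_I_mul_div (k : ℕ) : Function.Injective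
    fun j : Fin k ↦ Complex.exp (2 * Real.pi * Complex.I * (j : ℕ) / (k : ℕ)) := by
  intro i j h
  have exp_eq_pow (j : ℕ) : Complex.exp (2 * Real.pi * Complex.I * j / k) =
      Complex.exp (2 * Real.pi * Complex.I / k) ^ j := by
    rw [← Complex.exp_nat_mul]
    ring_nf
  simp only [exp_eq_pow] at h
  exact Fin.ext <| (Complex.isPrimitiveRoot_exp k i.pos.ne').pow_inj i.2 j.2 h

theorem norm_exp_two_pi_mul_I_mul_div (j k : ℕ) :
    ‖Complex.exp (2 * Real.pi * Complex.I * j / k)‖ = 1 := by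
  have arg_eq : 2 * Real.pi * Complex.I * j / k = (2 * Real.pi * j / k : ℝ) * Complex.I := by
    push_cast
    ring
  rw [arg_eq, Complex.norm_exp_ofReal_mul_I]

/-- The star graph in the plane is homeomorphic to the coordinate model. -/
noncomputable def starGraphHomeomorph (k : ℕ) : unitAxes (Fin k) ≃ₜ starGraph k :=
  unitAxesHomeomorph (injective_exp_two_pi_mul_I_mul_div k)
    fun j ↦ norm_exp_two_pi_mul_I_mul_div j k

end UnitAxes

section PiLattice

variable {ι : Type*} {L : ι → Type*} [∀ i, TopologicalSpace (L i)]

instance [∀ i, Max (L i)] [∀ i, ContinuousSup (L i)] : ContinuousSup (∀ i, L i) where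
  continuous_sup := continuous_pi fun i ↦
    ((continuous_apply i).comp continuous_fst).sup ((continuous_apply i).comp continuous_snd)

instance [∀ i, Min (L i)] [∀ i, ContinuousInf (L i)] : ContinuousInf (∀ i, L i) where
  continuous_inf := continuous_pi fun i ↦
    ((continuous_apply i).comp continuous_fst).inf ((continuous_apply i).comp continuous_snd)

end PiLattice

section L1Normalize

variable {ι : Type*} [Fintype ι]

/-- The vector of `ℓ¹`-norm one in the direction of `x`; it is `0` if `x = 0`. -/
noncomputable def l1Normalize (x : ι → ℝ) : ι → ℝ :=
  (∑ l, |x l|)⁻¹ • x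

theorem l1Normalize_neg (x : ι → ℝ) : l1Normalize (-x) = -l1Normalize x := by
  simp [l1Normalize]

theorem sum_abs_pos {x : ι → ℝ} (hx : x ≠ 0) : 0 < ∑ l, |x l| := by
  obtain ⟨l, hl⟩ := Function.ne_iff.mp hx
  exact Finset.sum_pos' (fun _ _ ↦ abs_nonneg _) ⟨l, Finset.mem_univ l, abs_pos.mpr hl⟩

theorem abs_l1Normalize_apply (x : ι → ℝ) (l : ι) :
    |l1Normalize x l| = |x l| / ∑ m, |x m| := by
  have sum_nonneg : 0 ≤ ∑ m, |x m| := Finset.sum_nonneg fun _ _ ↦ abs_nonneg _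
  rw [l1Normalize, Pi.smul_apply, smul_eq_mul, abs_mul, abs_inv, abs_of_nonneg sum_nonneg,
    inv_mul_eq_div]

theorem abs_l1Normalize_apply_le_one (x : ι → ℝ) (l : ι) : |l1Normalize x l| ≤ 1 := by
  rw [abs_l1Normalize_apply]
  exact div_le_one_of_le₀ (Finset.single_le_sum (f := fun m ↦ |x m|) (fun _ _ ↦ abs_nonneg _)
    (Finset.mem_univ l)) (Finset.sum_nonneg fun _ _ ↦ abs_nonneg _)

theorem sum_abs_l1Normalize {x : ι → ℝ} (hx : x ≠ 0) : ∑ l, |l1Normalize x l| = 1 := by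
  simp only [abs_l1Normalize_apply, ← Finset.sum_div, div_self (sum_abs_pos hx).ne']

theorem l1Normalize_eq_self {x : ι → ℝ} (hx : ∑ l, |x l| = 1) : l1Normalize x = x := by
  rw [l1Normalize, hx, inv_one, one_smul]

theorem continuousOn_l1Normalize : ContinuousOn (l1Normalize : (ι → ℝ) → ι → ℝ) {0}ᶜ :=
  ContinuousOn.smul (ContinuousOn.inv₀ (by fun_prop) fun _ hx ↦ (sum_abs_pos hx).ne')
    continuousOn_id

theorem lineMap_l1Normalize_ne_zero {x : ι → ℝ} (hx : x ≠ 0) {t : ℝ} (ht : t ∈ Icc 0 1) :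
    AffineMap.lineMap x (l1Normalize x) t ≠ 0 := by
  have eq_smul : AffineMap.lineMap x (l1Normalize x) t = (1 - t + t * (∑ l, |x l|)⁻¹) • x := by
    rw [AffineMap.lineMap_apply_module, l1Normalize, smul_smul, add_smul]
  have coeff_pos : 0 < 1 - t + t * (∑ l, |x l|)⁻¹ := by
    have inv_pos := inv_pos.mpr (sum_abs_pos hx)
    obtain rfl | ht₀ := ht.1.eq_or_lt
    · simp
    · exact add_pos_of_nonneg_of_pos (sub_nonneg.mpr ht.2) (mul_pos ht₀ inv_pos)
  rw [eq_smul]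
  exact smul_ne_zero coeff_pos.ne' hx

end L1Normalize

section Spreading

variable {ι : Type*} [Fintype ι] [DecidableEq ι]

theorem posPart_l1Normalize_sub_mem_segment {i : ι} {x y : ι → ℝ}
    (hx : x ∈ segment ℝ 0 (Pi.single i 1)) (hy : 0 ≤ y) :
    (l1Normalize (x - y))⁺ ∈ segment ℝ 0 (Pi.single i 1) := by
  refine mem_segment_zero_single.mpr ⟨⟨posPart_nonneg _, ?_⟩, fun l hl ↦ ?_⟩
  · exact (sup_le (le_abs_self _) (abs_nonneg _)).trans (abs_l1Normalize_apply_le_one _ i)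
  · have sub_nonpos : x l - y l ≤ 0 := by
      simpa [(mem_segment_zero_single.mp hx).2 l hl] using hy l
    exact posPart_eq_zero.mpr <| mul_nonpos_of_nonneg_of_nonpos
      (inv_nonneg.mpr <| Finset.sum_nonneg fun _ _ ↦ abs_nonneg _) sub_nonpos

theorem lineMap_posPart_l1Normalize_sub_mem_unitAxes {x y : ι → ℝ} (hx : x ∈ unitAxes ι)
    (hy : 0 ≤ y) {t : ℝ} (ht : t ∈ Icc 0 1) :
    AffineMap.lineMap x (l1Normalize (x - y))⁺ t ∈ unitAxes ι := by
  obtain ⟨i, hxi⟩ := mem_iUnion.mp hx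
  exact mem_iUnion.mpr
    ⟨i, (convex_segment _ _).lineMap_mem hxi (posPart_l1Normalize_sub_mem_segment hxi hy) ht⟩

/-- The position at time `t` of the point `x` of the configuration `{x, y}` while the two points
are spread apart. At time one the difference of the points is `l1Normalize (x - y)` and its positive
and negative parts are the points. -/
noncomputable def spreadPoint (t : unitInterval) (x y : unitAxes ι) : unitAxes ι :=
  ⟨AffineMap.lineMap x.1 (l1Normalize (x.1 - y.1))⁺ (t : ℝ),
    lineMap_posPart_l1Normalize_sub_mem_unitAxes x.2 (nonneg_of_mem_unitAxes y.2) t.2⟩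

theorem spreadPoint_zero (x y : unitAxes ι) : spreadPoint 0 x y = x := by
  simp [spreadPoint]

theorem coe_spreadPoint_one (x y : unitAxes ι) :
    (spreadPoint 1 x y : ι → ℝ) = (l1Normalize (x.1 - y.1))⁺ := by
  simp [spreadPoint]

theorem coe_spreadPoint_one_swap (x y : unitAxes ι) :
    (spreadPoint 1 y x : ι → ℝ) = (l1Normalize (x.1 - y.1))⁻ := by
  rw [coe_spreadPoint_one, ← neg_sub, l1Normalize_neg, posPart_neg]

theorem spreadPoint_sub_spreadPoint (t : unitInterval) (x y : unitAxes ι) :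
    (spreadPoint t x y - spreadPoint t y x : ι → ℝ) =
      AffineMap.lineMap (x.1 - y.1) (l1Normalize (x.1 - y.1)) (t : ℝ) := by
  have normalize_swap : l1Normalize (y.1 - x.1) = -l1Normalize (x.1 - y.1) := by
    rw [← l1Normalize_neg, neg_sub]
  simp only [spreadPoint, normalize_swap, posPart_neg]
  simpa using AffineMap.lineMap_vsub_lineMap x.1 (l1Normalize (x.1 - y.1))⁺ y.1
    (l1Normalize (x.1 - y.1))⁻ (t : ℝ)

theorem spreadPoint_ne_spreadPoint (t : unitInterval) (x y : unitAxes ι) (hxy : x ≠ y) :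
    spreadPoint t x y ≠ spreadPoint t y x := fun h ↦
  lineMap_l1Normalize_ne_zero (sub_ne_zero.mpr <| Subtype.coe_ne_coe.mpr hxy) t.2 <| by
    rw [← spreadPoint_sub_spreadPoint, h, sub_self]

theorem continuousOn_spreadPoint :
    ContinuousOn (fun p : unitInterval × unitAxes ι × unitAxes ι ↦ spreadPoint p.1 p.2.1 p.2.2)
      {p | p.2.1 ≠ p.2.2} := by
  rw [IsInducing.subtypeVal.continuousOn_iff]
  have continuousOn_normalize : ContinuousOn
      (fun p : unitInterval × unitAxes ι × unitAxes ι ↦ l1Normalize (p.2.1.1 - p.2.2.1))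
      {p | p.2.1 ≠ p.2.2} :=
    continuousOn_l1Normalize.comp (by fun_prop) fun p hp ↦
      sub_ne_zero.mpr <| Subtype.coe_ne_coe.mpr hp
  have continuousOn_posPart : ContinuousOn
      (fun p : unitInterval × unitAxes ι × unitAxes ι ↦ (l1Normalize (p.2.1.1 - p.2.2.1))⁺)
      {p | p.2.1 ≠ p.2.2} :=
    continuousOn_normalize.sup continuousOn_const
  exact ContinuousOn.lineMap (by fun_prop) continuousOn_posPart (by fun_prop)

/-- The map of unordered configurations which spreads two points apart until time `t`. -/
noncomputable def spread (t : unitInterval) : UConf 2 (unitAxes ι) → UConf 2 (unitAxes ι) :=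
  UConf.map₂ (spreadPoint t) (spreadPoint_ne_spreadPoint t)

theorem continuous_spread :
    Continuous fun p : unitInterval × UConf 2 (unitAxes ι) ↦ spread p.1 p.2 :=
  UConf.continuous_map₂ spreadPoint_ne_spreadPoint continuousOn_spreadPoint

theorem spread_zero (c : UConf 2 (unitAxes ι)) : spread 0 c = c := by
  induction c using Quotient.inductionOn with
  | h f => exact Quotient.sound (confSetoid_two_iff.mpr <| .inl
      ⟨spreadPoint_zero _ _, spreadPoint_zero _ _⟩)

theorem homotopic_id_spread_one :
    (ContinuousMap.id (UConf 2 (unitAxes ι))).Homotopic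
      ⟨spread 1, continuous_spread.comp (.prodMk_right 1)⟩ :=
  ⟨{ toFun := fun p ↦ spread p.1 p.2
     continuous_toFun := continuous_spread
     map_zero_left := spread_zero
     map_one_left := fun _ ↦ rfl }⟩

/-- The configurations of two points on different legs whose distances from the centre add up
to one; the centre itself belongs to every leg. -/
def spreadConf (ι : Type*) [Fintype ι] [DecidableEq ι] : Set (Conf 2 (unitAxes ι)) :=
  {f | (f.1 0 : ι → ℝ) ⊓ f.1 1 = 0 ∧ ∑ l, ((f.1 0 : ι → ℝ) + f.1 1) l = 1}

theorem exists_mem_spreadConf {x y : unitAxes ι} (h : (x : ι → ℝ) ⊓ y = 0)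
    (hs : ∑ l, ((x : ι → ℝ) + y) l = 1) : ∃ f ∈ spreadConf ι, f.1 = ![x, y] := by
  have ne : x ≠ y := by
    rintro rfl
    rw [inf_idem] at h
    simp [h] at hs
  exact ⟨⟨![x, y], injective_pair_iff_ne.mpr ne⟩, ⟨h, hs⟩, rfl⟩

theorem isCompact_spreadConf : IsCompact (spreadConf ι) := by
  have image_eq : Subtype.val '' spreadConf ι =
      {f : Fin 2 → unitAxes ι |
        (f 0 : ι → ℝ) ⊓ f 1 = 0 ∧ ∑ l, ((f 0 : ι → ℝ) + f 1) l = 1} := by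
    refine Subset.antisymm (image_subset_iff.mpr fun _ hf ↦ hf) fun f hf ↦ ?_
    obtain ⟨g, hg, hgf⟩ := exists_mem_spreadConf hf.1 hf.2
    exact ⟨g, hg, hgf.trans <| funext <| Fin.forall_fin_two.mpr ⟨rfl, rfl⟩⟩
  have continuous_coe (i : Fin 2) : Continuous fun f : Fin 2 → unitAxes ι ↦ (f i : ι → ℝ) := by
    fun_prop
  rw [IsEmbedding.subtypeVal.isCompact_iff, image_eq]
  exact ((isClosed_eq ((continuous_coe 0).inf (continuous_coe 1)) continuous_const).inter
    (isClosed_eq (by fun_prop) continuous_const)).isCompact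

theorem rel_of_mem_spreadConf_of_add_eq_add {f g : Conf 2 (unitAxes ι)} (hf : f ∈ spreadConf ι)
    (hg : g ∈ spreadConf ι) (h : (f.1 0 : ι → ℝ) + f.1 1 = g.1 0 + g.1 1) :
    confSetoid 2 (unitAxes ι) f g := by
  simpa only [confSetoid_two_iff, Subtype.ext_iff] using eq_and_eq_or_eq_and_eq_of_add_eq_add
    (f.1 0).2 (f.1 1).2 (g.1 0).2 (g.1 1).2 hf.1 hg.1 h

end Spreading

section Skeleton

variable {ι : Type*} [Fintype ι] [DecidableEq ι]

/-- The point `|x - y| / ‖x - y‖₁` of the standard simplex attached to a configuration `(x, y)`; it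
records the direction of `x - y` up to signs, hence does not depend on the order of the points. -/
noncomputable def Conf.absDirection (f : Conf 2 (unitAxes ι)) : ι → ℝ :=
  |l1Normalize ((f.1 0 : ι → ℝ) - f.1 1)|

theorem Conf.absDirection_eq_of_rel {f g : Conf 2 (unitAxes ι)}
    (h : confSetoid 2 (unitAxes ι) f g) : f.absDirection = g.absDirection := by
  rcases confSetoid_two_iff.mp h with ⟨h₀, h₁⟩ | ⟨h₀, h₁⟩
  · rw [absDirection, absDirection, h₀, h₁]
  · rw [absDirection, absDirection, h₀, h₁, ← neg_sub, l1Normalize_neg, abs_neg]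

theorem Conf.continuous_absDirection :
    Continuous (Conf.absDirection : Conf 2 (unitAxes ι) → ι → ℝ) := by
  have continuous_coe (i : Fin 2) :
      Continuous fun f : Conf 2 (unitAxes ι) ↦ (f.1 i : ι → ℝ) :=
    continuous_subtype_val.comp <| (continuous_apply i).comp continuous_subtype_val
  have continuous_normalize :=
    continuousOn_l1Normalize.comp_continuous ((continuous_coe 0).sub (continuous_coe 1))
      fun f ↦ sub_ne_zero.mpr <| Subtype.coe_ne_coe.mpr f.apply_zero_ne_apply_one
  exact continuous_normalize.sup continuous_normalize.neg

theorem Conf.absDirection_eq_add {f : Conf 2 (unitAxes ι)} (hf : f ∈ spreadConf ι) :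
    f.absDirection = (f.1 0 : ι → ℝ) + f.1 1 := by
  have abs_sub : |(f.1 0 : ι → ℝ) - f.1 1| = (f.1 0 : ι → ℝ) + f.1 1 := by
    rw [← inf_add_sup, abs_sub_comm, ← sup_sub_inf_eq_abs_sub, hf.1, sub_zero, zero_add]
  have sum_abs : ∑ l, |((f.1 0 : ι → ℝ) - f.1 1) l| = 1 :=
    (congrArg (fun u : ι → ℝ ↦ ∑ l, u l) abs_sub).trans hf.2
  rw [absDirection, l1Normalize_eq_self sum_abs, abs_sub]

theorem Conf.sum_absDirection (f : Conf 2 (unitAxes ι)) : ∑ l, f.absDirection l = 1 :=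
  sum_abs_l1Normalize <| sub_ne_zero.mpr <| Subtype.coe_ne_coe.mpr f.apply_zero_ne_apply_one

/-- The configuration which two points reach when they have been spread apart. -/
noncomputable def Conf.spreadOut (f : Conf 2 (unitAxes ι)) : Conf 2 (unitAxes ι) :=
  Conf.map₂ (spreadPoint 1) (spreadPoint_ne_spreadPoint 1) f

theorem Conf.spreadOut_add (f : Conf 2 (unitAxes ι)) :
    (f.spreadOut.1 0 : ι → ℝ) + f.spreadOut.1 1 = f.absDirection := by
  change (spreadPoint 1 (f.1 0) (f.1 1) + spreadPoint 1 (f.1 1) (f.1 0) : ι → ℝ) = _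
  rw [coe_spreadPoint_one, coe_spreadPoint_one_swap, posPart_add_negPart, absDirection]

theorem Conf.spreadOut_mem_spreadConf (f : Conf 2 (unitAxes ι)) : f.spreadOut ∈ spreadConf ι := by
  refine ⟨?_, ?_⟩
  · change (spreadPoint 1 (f.1 0) (f.1 1) : ι → ℝ) ⊓ spreadPoint 1 (f.1 1) (f.1 0) = 0
    rw [coe_spreadPoint_one, coe_spreadPoint_one_swap, posPart_inf_negPart_eq_zero]
  · rw [f.spreadOut_add, f.sum_absDirection]

theorem Conf.absDirection_spreadOut (f : Conf 2 (unitAxes ι)) :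
    f.spreadOut.absDirection = f.absDirection := by
  rw [absDirection_eq_add f.spreadOut_mem_spreadConf, spreadOut_add]

theorem Conf.absDirection_apply_eq_zero (f : Conf 2 (unitAxes ι)) {l : ι}
    (h₀ : (f.1 0 : ι → ℝ) l = 0) (h₁ : (f.1 1 : ι → ℝ) l = 0) : f.absDirection l = 0 := by
  simp [absDirection, l1Normalize, h₀, h₁]

variable {k : ℕ}

theorem mem_simplexOneSkeleton_iff {p : Fin k → ℝ} :
    p ∈ simplexOneSkeleton k ↔
      ∃ i j, i ≠ j ∧ p ∈ segment ℝ (Pi.single i (1 : ℝ)) (Pi.single j (1 : ℝ)) := by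
  simp only [simplexOneSkeleton, mem_iUnion, exists_prop]
  refine ⟨fun ⟨i, j, hij, hp⟩ ↦ ⟨i, j, hij.ne, hp⟩, fun ⟨i, j, hij, hp⟩ ↦ ?_⟩
  obtain h | h := hij.lt_or_gt
  · exact ⟨i, j, h, hp⟩
  · exact ⟨j, i, h, segment_symm ℝ (Pi.single i 1) _ ▸ hp⟩

theorem mem_simplexOneSkeleton_of_apply_eq_zero {p : Fin k → ℝ} (hp : 0 ≤ p) (hs : ∑ l, p l = 1)
    {i j : Fin k} (hij : i ≠ j) (h : ∀ l, l ≠ i → l ≠ j → p l = 0) : p ∈ simplexOneSkeleton k := by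
  refine mem_simplexOneSkeleton_iff.mpr ⟨i, j, hij, p i, p j, hp i, hp j, ?_, funext fun l ↦ ?_⟩
  · rw [← hs, Finset.sum_eq_add i j hij (fun l _ hl ↦ h l hl.1 hl.2) (by simp) (by simp)]
  · obtain rfl | hi := eq_or_ne l i
    · simp [hij]
    · obtain rfl | hj := eq_or_ne l j
      · simp [hi]
      · simp [hi, hj, h l hi hj]

theorem exists_mem_spreadConf_absDirection_eq {p : Fin k → ℝ} (hp : p ∈ simplexOneSkeleton k) :
    ∃ f ∈ spreadConf (Fin k), f.absDirection = p := by
  obtain ⟨i, j, hij, a, b, ha, hb, hab, rfl⟩ := mem_simplexOneSkeleton_iff.mp hp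
  have single_mem (l : Fin k) {c : ℝ} (hc : c ∈ Icc 0 1) : Pi.single l c ∈ unitAxes (Fin k) :=
    mem_unitAxes_iff_exists_single.mpr ⟨l, c, hc, rfl⟩
  obtain ⟨f, hf, hfp⟩ := exists_mem_spreadConf
    (x := ⟨Pi.single i a, single_mem i ⟨ha, by linarith⟩⟩)
    (y := ⟨Pi.single j b, single_mem j ⟨hb, by linarith⟩⟩)
    (by ext l; simp only [Pi.inf_apply, Pi.zero_apply]; grind)
    (by simpa [Finset.sum_add_distrib] using hab)
  refine ⟨f, hf, ?_⟩
  rw [Conf.absDirection_eq_add hf, hfp]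
  simp [← Pi.single_smul']

theorem Conf.absDirection_mem_simplexOneSkeleton [Nontrivial (Fin k)]
    (f : Conf 2 (unitAxes (Fin k))) : f.absDirection ∈ simplexOneSkeleton k := by
  obtain ⟨i, hi⟩ := mem_iUnion.mp (f.1 0).2
  obtain ⟨j, hj⟩ := mem_iUnion.mp (f.1 1).2
  have zero_of_ne {l : Fin k} (hli : l ≠ i) (hlj : l ≠ j) : f.absDirection l = 0 :=
    f.absDirection_apply_eq_zero ((mem_segment_zero_single.mp hi).2 l hli)
      ((mem_segment_zero_single.mp hj).2 l hlj)
  obtain ⟨m, hmi, hm⟩ : ∃ m, m ≠ i ∧ ∀ l ≠ m, l ≠ i → l ≠ j := by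
    obtain rfl | hij := eq_or_ne i j
    · obtain ⟨m, hm⟩ := exists_ne i
      exact ⟨m, hm, fun _ _ ↦ id⟩
    · exact ⟨j, hij.symm, fun _ hl _ ↦ hl⟩
  exact mem_simplexOneSkeleton_of_apply_eq_zero (abs_nonneg _) f.sum_absDirection hmi.symm
    fun l hli hlm ↦ zero_of_ne hli (hm l hlm hli)

/-- The map `{x, y} ↦ |x - y| / ‖x - y‖₁` from unordered configurations to the skeleton, which is a
homotopy equivalence. -/
noncomputable def toSkeleton (k : ℕ) [Nontrivial (Fin k)] :
    C(UConf 2 (unitAxes (Fin k)), simplexOneSkeleton k) where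
  toFun := Quotient.lift (fun f ↦ ⟨f.absDirection, f.absDirection_mem_simplexOneSkeleton⟩)
    fun _ _ h ↦ Subtype.ext (Conf.absDirection_eq_of_rel h)
  continuous_toFun := (Conf.continuous_absDirection.subtype_mk _).quotient_lift _

theorem bijOn_toSkeleton [Nontrivial (Fin k)] :
    BijOn (toSkeleton k) (Quotient.mk (confSetoid 2 (unitAxes (Fin k))) '' spreadConf (Fin k))
      univ := by
  refine ⟨mapsTo_univ _ _, ?_, fun ⟨p, hp⟩ _ ↦ ?_⟩
  · rintro _ ⟨f, hf, rfl⟩ _ ⟨g, hg, rfl⟩ h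
    refine Quotient.sound (rel_of_mem_spreadConf_of_add_eq_add hf hg ?_)
    rw [← Conf.absDirection_eq_add hf, ← Conf.absDirection_eq_add hg]
    exact congrArg Subtype.val h
  · obtain ⟨f, hf, rfl⟩ := exists_mem_spreadConf_absDirection_eq hp
    exact ⟨_, mem_image_of_mem _ hf, rfl⟩

/-- The homotopy equivalence induced by `toSkeleton`. -/
noncomputable def uconfTwoUnitAxesHomotopyEquiv (k : ℕ) [Nontrivial (Fin k)] :
    UConf 2 (unitAxes (Fin k)) ≃ₕ simplexOneSkeleton k :=
  homotopyEquivOfBijOnCompact (toSkeleton k) (isCompact_spreadConf.image continuous_quotient_mk')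
    bijOn_toSkeleton homotopic_id_spread_one
    (Quotient.ind fun f ↦ mem_image_of_mem _ f.spreadOut_mem_spreadConf)
    (Quotient.ind fun f ↦ Subtype.ext f.absDirection_spreadOut)

end Skeleton

/-- The unordered configuration space of 2 points on the star graph `Y_k` (`k ≥ 3`)
is homotopy equivalent to the 1-skeleton of the `(k-1)`-simplex. -/
theorem uconf_two_star_graph_homotopyEquiv_simplex_one_skeleton (k : ℕ) (hk : 3 ≤ k) :
    Nonempty (ContinuousMap.HomotopyEquiv (UConf 2 (starGraph k))
      (simplexOneSkeleton k)) := by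
  have : Nontrivial (Fin k) := Fin.nontrivial_iff_two_le.mpr (by omega)
  exact ⟨(UConf.congr 2 (starGraphHomeomorph k)).symm.toHomotopyEquiv.trans
    (uconfTwoUnitAxesHomotopyEquiv k)⟩
end

section
/- Let G be a finite connected simple graph on vertex set Fin k with at least one edge, and suppose there is a vertex v₀ of G lying on every simple loop of G, i.e., for every vertex u and every closed walk c from u to u in G that is a cycle, v₀ belongs to the support of c. Then the 2-strand graph braid group B₂(|G|) = π₁(UC²(|G|)) (at any basepoint) is a free group. -/
/-- The geometric realization of a simple graph on `Fin k`: the union, over the edges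
`{i, j}` of `G`, of the straight segments in `ℝ^{Fin k}` joining the standard basis
vectors `e_i` and `e_j`. -/
def graphRealization {k : ℕ} (G : SimpleGraph (Fin k)) : Set (Fin k → ℝ) :=
  ⋃ (i : Fin k) (j : Fin k) (_ : G.Adj i j),
    segment ℝ (Pi.single i (1 : ℝ)) (Pi.single j (1 : ℝ))

/-!
Freeness of `π₁` is detected by nonabelian singular 1-cocycles. If the cocycles on a space lift
along all surjections of groups, then lifting the tautological `π₁`-valued cocycle to a free group
mapping onto `π₁` embeds `π₁` in that free group, and subgroups of free groups are free. The
lifting property passes to a union of two open sets each having it, provided all cocycles on the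
intersection are coboundaries: there, two lifts agree after a gauge transformation by a function
with values in the kernel, and such a function extends.

Starting from the configurations in the open edges, put the vertices back one at a time, `v₀`
last. When `v` is put back into `|G|` with the vertices outside `T` removed, the new
configurations have one point closer to `v` than the other, which varies in the punctured graph.
As `v₀ ∉ T`, the induced graph on `T` is a forest, so all components of the punctured graph are
contractible; the closer point can be pulled to `v`, or merely towards `v` along its edge if it
has to avoid `v`. Hence the new open set and its intersection with the old one are homotopy
equivalent to disjoint unions of contractible sets. In the open edges, a linear order of the
points distinguishes the two members of a pair, and the increasing pairs form a disjoint union of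
convex sets.
-/

open Set Topology unitInterval

universe u

section PathCocycles

variable {X Y E : Type*} [TopologicalSpace X] [TopologicalSpace Y]
  [NormedAddCommGroup E] [NormedSpace ℝ E] {K H : Type*} [Group K] [Group H]

/-- The horizontal side `t ↦ (t, s)` of the unit square. -/
def horizontalEdge (s : I) : C(I, I × I) := (ContinuousMap.id I).prodMk (.const I s)

/-- The vertical side `t ↦ (s, t)` of the unit square. -/
def verticalEdge (s : I) : C(I, I × I) := (ContinuousMap.const I s).prodMk (.id I)

/-- The diagonal `t ↦ (t, t)` of the unit square. -/
def diagonalEdge : C(I, I × I) := (ContinuousMap.id I).prodMk (.id I)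

/-- The affine path from `p` to `q`. -/
def segmentPath (p q : E) : C(I, E) := (Path.segment p q).toContinuousMap

/-- A nonabelian singular 1-cocycle on the subset `A`, with values in a group `K`: a function of
paths, multiplicative along the two sides and the diagonal of every square lying in `A`.
Its values on paths leaving `A` are irrelevant. -/
def IsPathCocycle (A : Set X) (c : C(I, X) → K) : Prop :=
  ∀ F : C(I × I, X), (∀ z, F z ∈ A) →
    c (F.comp (horizontalEdge 0)) * c (F.comp (verticalEdge 1)) = c (F.comp diagonalEdge)

/-- The coboundary of a 0-cochain `f`, with values `(f x)⁻¹ * f y` on paths from `x` to `y`. -/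
def coboundary (f : X → K) (γ : C(I, X)) : K := (f (γ 0))⁻¹ * f (γ 1)

lemma segmentPath_apply (p q : E) (t : I) : segmentPath p q t = AffineMap.lineMap p q (t : ℝ) :=
  rfl

lemma segmentPath_same (p : E) : segmentPath p p = .const I p := by
  ext t; simp [segmentPath_apply]

lemma segmentPath_mem {D : Set E} (hD : Convex ℝ D) {p q : E} (hp : p ∈ D) (hq : q ∈ D) (t : I) :
    segmentPath p q t ∈ D :=
  hD.lineMap_mem hp hq t.2

namespace IsPathCocycle

variable {A B : Set X} {c d : C(I, X) → K}

lemma mono (hc : IsPathCocycle B c) (hAB : A ⊆ B) : IsPathCocycle A c :=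
  fun F hF => hc F fun z => hAB (hF z)

lemma congr (hc : IsPathCocycle A c) (hcd : ∀ γ : C(I, X), (∀ t, γ t ∈ A) → d γ = c γ) :
    IsPathCocycle A d := fun F hF => by
  rw [hcd _ fun t => hF _, hcd _ fun t => hF _, hcd _ fun t => hF _, hc F hF]

lemma map_hom (hc : IsPathCocycle A c) (φ : K →* H) : IsPathCocycle A (φ ∘ c) := fun F hF => by
  simp only [Function.comp_apply, ← map_mul, hc F hF]

lemma comp (hc : IsPathCocycle A c) (g : C(Y, X)) :
    IsPathCocycle (g ⁻¹' A) fun γ => c (g.comp γ) :=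
  fun F hF => hc (g.comp F) hF

lemma gauge (hc : IsPathCocycle A c) (f : X → K) :
    IsPathCocycle A fun γ => (f (γ 0))⁻¹ * c γ * f (γ 1) := fun F hF => by
  simp only [← hc F hF]
  simp [horizontalEdge, verticalEdge, diagonalEdge, mul_assoc]

lemma const (hc : IsPathCocycle A c) {x : X} (hx : x ∈ A) : c (.const I x) = 1 :=
  mul_eq_left.mp (hc (.const _ x) fun _ => hx)

lemma square (hc : IsPathCocycle A c) {F : C(I × I, X)} (hF : ∀ z, F z ∈ A) :
    c (F.comp (horizontalEdge 0)) * c (F.comp (verticalEdge 1)) =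
      c (F.comp (verticalEdge 0)) * c (F.comp (horizontalEdge 1)) :=
  (hc F hF).trans (hc (F.comp .prodSwap) fun z => hF z.swap).symm

lemma segment_mul_segment (hc : IsPathCocycle A c) (G : C(E, X)) {D : Set E} (hD : Convex ℝ D)
    (hG : MapsTo G D A) {p q r : E} (hp : p ∈ D) (hq : q ∈ D) (hr : r ∈ D) :
    c (G.comp (segmentPath p q)) * c (G.comp (segmentPath q r)) =
      c (G.comp (segmentPath p r)) := by
  let Q : C(I × I, E) :=
    ⟨fun z => AffineMap.lineMap p (AffineMap.lineMap q r (z.2 : ℝ)) (z.1 : ℝ), by fun_prop⟩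
  have hQ (z : I × I) : Q z ∈ D := hD.lineMap_mem hp (hD.lineMap_mem hq hr z.2.2) z.1.2
  have bottom : Q.comp (horizontalEdge 0) = segmentPath p q := by
    ext t; simp [Q, horizontalEdge, segmentPath_apply]
  have right : Q.comp (verticalEdge 1) = segmentPath q r := by
    ext t; simp [Q, verticalEdge, segmentPath_apply]
  have left : Q.comp (verticalEdge 0) = .const I p := by
    ext t; simp [Q, verticalEdge]
  have top : Q.comp (horizontalEdge 1) = segmentPath p r := by
    ext t; simp [Q, horizontalEdge, segmentPath_apply]
  have key := hc.square (F := G.comp Q) fun z => hG (hQ z)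
  simp only [ContinuousMap.comp_assoc, bottom, right, left, top] at key
  rwa [ContinuousMap.comp_const, hc.const (hG hp), one_mul] at key

end IsPathCocycle

lemma isPathCocycle_coboundary (A : Set X) (f : X → K) : IsPathCocycle A (coboundary f) :=
  fun F _ => by simp [coboundary, horizontalEdge, verticalEdge, diagonalEdge, mul_assoc]

end PathCocycles

section LocalPrimitives

variable {S T E : Type*} [TopologicalSpace S] [TopologicalSpace T] {K : Type*} [Group K]

/-- `Φ` is a primitive on `s` of the two-point function `β`, infinitesimally near the diagonal:
`β p q = (Φ p)⁻¹ * Φ q` as soon as `q ∈ s` is close enough to `p ∈ s`. -/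
def IsLocalPrimitiveOn (β : S → S → K) (s : Set S) (Φ : S → K) : Prop :=
  ∀ p ∈ s, ∀ᶠ q in 𝓝[s] p, (Φ p)⁻¹ * Φ q = β p q

namespace IsLocalPrimitiveOn

variable {β β' : S → S → K} {s : Set S} {t : Set T} {Φ Ψ : S → K}

lemma congr (hΦ : IsLocalPrimitiveOn β s Φ) (hβ : ∀ p ∈ s, ∀ᶠ q in 𝓝[s] p, β p q = β' p q) :
    IsLocalPrimitiveOn β' s Φ := fun p hp => by
  filter_upwards [hΦ p hp, hβ p hp] with q h₁ h₂ using h₁.trans h₂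

lemma comp (hΦ : IsLocalPrimitiveOn β s Φ) {g : T → S} (hg : ContinuousOn g t)
    (hgs : MapsTo g t s) : IsLocalPrimitiveOn (fun p q => β (g p) (g q)) t (Φ ∘ g) :=
  fun p hp => ((hg p hp).tendsto_nhdsWithin hgs).eventually (hΦ (g p) (hgs hp))

lemma increment_eq (hs : IsPreconnected s) (hΦ : IsLocalPrimitiveOn β s Φ)
    (hΨ : IsLocalPrimitiveOn β s Ψ) {p q : S} (hp : p ∈ s) (hq : q ∈ s) :
    (Φ p)⁻¹ * Φ q = (Ψ p)⁻¹ * Ψ q := by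
  let P (x y : S) : Prop := (Φ x)⁻¹ * Φ y = (Ψ x)⁻¹ * Ψ y
  refine hs.induction₂ P (fun x hx => ?_) (fun x y z _ _ _ hxy hyz => ?_) (fun x y _ _ hxy => ?_)
    hp hq
  · filter_upwards [hΦ x hx, hΨ x hx] with y h₁ h₂ using h₁.trans h₂.symm
  · calc (Φ x)⁻¹ * Φ z = ((Φ x)⁻¹ * Φ y) * ((Φ y)⁻¹ * Φ z) := by group
      _ = ((Ψ x)⁻¹ * Ψ y) * ((Ψ y)⁻¹ * Ψ z) := by rw [hxy, hyz]
      _ = (Ψ x)⁻¹ * Ψ z := by group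
  · simpa [P, mul_inv_rev] using congrArg (·⁻¹) hxy

end IsLocalPrimitiveOn

section Existence

variable [NormedAddCommGroup E] [NormedSpace ℝ E]

lemma dist_subdivision_le {N i j : ℕ} (hij : i ≤ j) (hji : j ≤ i + 1) (hjN : j ≤ N) (p q : E) :
    dist (((i : ℝ) / N) • p) (((j : ℝ) / N) • q) ≤ ‖p‖ / N + dist p q := by
  have hj : |(j : ℝ) / N| ≤ 1 := by
    rw [abs_of_nonneg (by positivity)]
    exact div_le_one_of_le₀ (by exact_mod_cast hjN) (by positivity)
  have hgap : |(i : ℝ) / N - j / N| ≤ 1 / N := by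
    rw [← sub_div, abs_div, Nat.abs_cast, abs_sub_comm, abs_of_nonneg (by simpa using hij)]
    gcongr
    rw [sub_le_iff_le_add']
    exact_mod_cast hji
  calc dist (((i : ℝ) / N) • p) (((j : ℝ) / N) • q)
      = ‖((i : ℝ) / N - j / N) • p + ((j : ℝ) / N) • (p - q)‖ := by
        rw [dist_eq_norm]; congr 1; module
    _ ≤ |(i : ℝ) / N - j / N| * ‖p‖ + |(j : ℝ) / N| * ‖p - q‖ := by
        simpa only [norm_smul, Real.norm_eq_abs] using
          norm_add_le (((i : ℝ) / N - j / N) • p) (((j : ℝ) / N) • (p - q))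
    _ ≤ 1 / N * ‖p‖ + 1 * ‖p - q‖ := by gcongr
    _ = ‖p‖ / N + dist p q := by rw [one_div_mul_eq_div, one_mul, dist_eq_norm]

-- The value of the primitive at `p` is the product of `β` along a fine subdivision of `[0, p]`.
-- Two such products, at nearby points, are compared rung by rung along a ladder.
lemma exists_primitive_of_uniform_cocycle {β : E → E → K} {s : Set E} {δ : ℝ} (hδ : 0 < δ)
    (hs : StarConvex ℝ 0 s) (hb : Bornology.IsBounded s)
    (hβ : ∀ a ∈ s, ∀ p ∈ Metric.ball a δ, ∀ q ∈ Metric.ball a δ, ∀ r ∈ Metric.ball a δ,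
      β p q * β q r = β p r) :
    ∃ Φ : E → K, ∀ p ∈ s, ∀ q, dist p q < δ / 2 → (Φ p)⁻¹ * Φ q = β p q := by
  obtain ⟨R, hR, hsR⟩ := hb.exists_pos_norm_le
  obtain ⟨N, hN⟩ := exists_nat_gt (2 * R / δ)
  have hN₀ : (0 : ℝ) < N := lt_trans (by positivity) hN
  have hmesh : R / N < δ / 2 := by
    rw [div_lt_iff₀ hδ] at hN
    rw [div_lt_iff₀ hN₀]
    linarith
  let x (p : E) (i : ℕ) : E := ((i : ℝ) / N) • p
  let P (p : E) (n : ℕ) : K := ((List.range n).map fun i => β (x p i) (x p (i + 1))).prod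
  have ladder (p q : E) (hp : p ∈ s) (hpq : dist p q < δ / 2) (i : ℕ) (hi : i ≤ N) :
      P p i * β (x p i) (x q i) = P q i := by
    induction i with
    | zero => simpa [P, x] using hβ _ (hs.mem ⟨p, hp⟩) 0 (by simpa) 0 (by simpa) 0 (by simpa)
    | succ i ih =>
      have ha : x p i ∈ s :=
        hs.smul_mem hp (by positivity) (div_le_one_of_le₀ (by norm_cast; omega) hN₀.le)
      have near (r : E) (hr : dist p r < δ / 2) (j : ℕ) (hij : i ≤ j) (hji : j ≤ i + 1) :
          x r j ∈ Metric.ball (x p i) δ := by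
        calc dist (x r j) (x p i) = dist (x p i) (x r j) := dist_comm _ _
          _ ≤ ‖p‖ / N + dist p r := dist_subdivision_le hij hji (hji.trans hi) _ _
          _ ≤ R / N + dist p r := by gcongr; exact hsR p hp
          _ < δ := by linarith
      have hself := near p (by simpa using hδ) i le_rfl (by omega)
      have hp' := near p (by simpa using hδ) (i + 1) (by omega) le_rfl
      have hside := near q hpq i le_rfl (by omega)
      have hq' := near q hpq (i + 1) (by omega) le_rfl
      have step (r : E) : P r (i + 1) = P r i * β (x r i) (x r (i + 1)) :=
        List.prod_range_succ _ _
      rw [step, step, ← ih (by omega), mul_assoc, mul_assoc, hβ _ ha _ hself _ hp' _ hq',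
        hβ _ ha _ hself _ hside _ hq']
  refine ⟨fun p => P p N, fun p hp q hpq => ?_⟩
  have last (r : E) : x r N = r := by simp [x, hN₀.ne']
  have key := ladder p q hp hpq N le_rfl
  rw [last, last] at key
  exact inv_mul_eq_of_eq_mul key.symm

end Existence

end LocalPrimitives

section Gluing

variable {X Y E : Type*} [TopologicalSpace X] [TopologicalSpace Y]
  [NormedAddCommGroup E] [NormedSpace ℝ E] {K : Type*} [Group K]
  {A B : Set X} {c d : C(I, X) → K}

/-- The values of `c` on the images under `G` of affine paths. -/
def alongSegments (c : C(I, X) → K) (G : C(E, X)) (p q : E) : K := c (G.comp (segmentPath p q))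

/-- The constant extension of a path to the real line. -/
noncomputable def extendPath (γ : C(I, X)) : C(ℝ, X) := γ.comp (ContinuousMap.projIccCM)

lemma extendPath_comp_segmentPath (γ : C(I, X)) :
    (extendPath γ).comp (segmentPath 0 1) = γ := by
  ext t; simp [extendPath, segmentPath_apply, ContinuousMap.projIccCM, AffineMap.lineMap_apply]

lemma preimage_mem_nhds_of_mem_nhdsWithin {g : Y → X} (hg : Continuous g) (hgA : ∀ y, g y ∈ A)
    {y : Y} {U : Set X} (hU : U ∈ 𝓝[A] g y) : g ⁻¹' U ∈ 𝓝 y :=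
  tendsto_nhdsWithin_of_tendsto_nhds_of_eventually_within _ (hg.tendsto y) (.of_forall hgA) hU

lemma IsPathCocycle.isLocalPrimitiveOn (hc : IsPathCocycle A c) {G : C(E, X)}
    (hG : ∀ x, G x ∈ A) (p : E) (s : Set E) :
    IsLocalPrimitiveOn (alongSegments c G) s (alongSegments c G p) :=
  fun _ _ => .of_forall fun _ => inv_mul_eq_of_eq_mul
    (hc.segment_mul_segment G convex_univ (fun x _ => hG x) trivial trivial trivial).symm

lemma IsPathCocycle.eq_increment (hc : IsPathCocycle A c) {γ : C(I, X)} (hγ : ∀ t, γ t ∈ A)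
    {Φ : ℝ → K} (hΦ : IsLocalPrimitiveOn (alongSegments c (extendPath γ)) (Icc 0 1) Φ) :
    c γ = (Φ 0)⁻¹ * Φ 1 := by
  have hγ' (x : ℝ) : extendPath γ x ∈ A := hγ _
  have h₀ : alongSegments c (extendPath γ) 0 0 = 1 := by
    rw [alongSegments, segmentPath_same]; exact hc.const (hγ' 0)
  have h₁ : alongSegments c (extendPath γ) 0 1 = c γ := by
    rw [alongSegments, extendPath_comp_segmentPath]
  have key := (hc.isLocalPrimitiveOn hγ' 0 _).increment_eq isPreconnected_Icc hΦ
    (left_mem_Icc.2 zero_le_one) (right_mem_Icc.2 zero_le_one)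
  rwa [h₀, h₁, inv_one, one_mul] at key

lemma IsPathCocycle.eq_of_locally_eq (hc : IsPathCocycle A c) (hd : IsPathCocycle A d)
    (hcd : ∀ x ∈ A, ∃ U ∈ 𝓝[A] x, ∀ γ : C(I, X), (∀ t, γ t ∈ U) → c γ = d γ)
    {γ : C(I, X)} (hγ : ∀ t, γ t ∈ A) : c γ = d γ := by
  have hγ' (x : ℝ) : extendPath γ x ∈ A := hγ _
  have near (p : ℝ) : ∀ᶠ q in 𝓝 p,
      alongSegments d (extendPath γ) p q = alongSegments c (extendPath γ) p q := by
    obtain ⟨U, hU, hcdU⟩ := hcd _ (hγ' p)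
    obtain ⟨ε, hε, hball⟩ := Metric.mem_nhds_iff.1 <|
      preimage_mem_nhds_of_mem_nhdsWithin (extendPath γ).continuous hγ' hU
    filter_upwards [Metric.ball_mem_nhds p hε] with q hq
    exact (hcdU _ fun t => hball (segmentPath_mem (convex_ball p ε)
      (Metric.mem_ball_self hε) hq t)).symm
  rw [hd.eq_increment hγ (hd.isLocalPrimitiveOn hγ' 0 _)]
  exact hc.eq_increment hγ
    ((hd.isLocalPrimitiveOn hγ' 0 _).congr fun p _ => mem_nhdsWithin_of_mem_nhds (near p))

lemma IsLocalPrimitiveOn.increment_eq_of_segment {G : C(E, X)} {γ : C(I, X)} {Φ : ℝ → K}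
    (hΦ : IsLocalPrimitiveOn (alongSegments c (extendPath γ)) (Icc 0 1) Φ) {s : Set E} {Ψ : E → K}
    (hΨ : IsLocalPrimitiveOn (alongSegments c G) s Ψ) (hs : Convex ℝ s) {p q : E} (hp : p ∈ s)
    (hq : q ∈ s) (hγ : ∀ t : ℝ, G (AffineMap.lineMap p q t) = extendPath γ t) :
    (Φ 0)⁻¹ * Φ 1 = (Ψ p)⁻¹ * Ψ q := by
  let l : ℝ →ᵃ[ℝ] E := AffineMap.lineMap p q
  have hβ (x y : ℝ) : alongSegments c G (l x) (l y) = alongSegments c (extendPath γ) x y :=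
    congrArg c <| ContinuousMap.ext fun t => by
      simp [segmentPath_apply, ← hγ, l, ← AffineMap.apply_lineMap]
  have hl : IsLocalPrimitiveOn (alongSegments c (extendPath γ)) (Icc 0 1) (Ψ ∘ l) :=
    (hΨ.comp AffineMap.lineMap_continuous.continuousOn fun t ht => hs.lineMap_mem hp hq ht).congr
      fun x _ => .of_forall fun y => hβ x y
  simpa [l] using hΦ.increment_eq isPreconnected_Icc hl (left_mem_Icc.2 zero_le_one)
    (right_mem_Icc.2 zero_le_one)

section Existence

variable (hc : ∀ x ∈ A, ∃ U ∈ 𝓝[A] x, IsPathCocycle U c)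
include hc

lemma exists_isLocalPrimitiveOn {G : C(E, X)} (hG : ∀ x, G x ∈ A) {s : Set E} (hs : IsCompact s)
    (hs₀ : StarConvex ℝ 0 s) : ∃ Φ, IsLocalPrimitiveOn (alongSegments c G) s Φ := by
  choose! U hU hcU using hc
  have hU' (p : E) : G ⁻¹' U (G p) ∈ 𝓝 p :=
    preimage_mem_nhds_of_mem_nhdsWithin G.continuous hG (hU _ (hG p))
  obtain ⟨δ, hδ, hball⟩ :=
    Metric.uniformity_basis_dist.lebesgue_number_lemma_nhds hs fun p _ => hU' p
  obtain ⟨Φ, hΦ⟩ := exists_primitive_of_uniform_cocycle (β := alongSegments c G) hδ hs₀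
    hs.isBounded fun a ha p hp q hq r hr => by
      obtain ⟨b, hb⟩ := hball a ha
      have hab : MapsTo G (Metric.ball a δ) (U (G b)) := fun x hx =>
        hb <| by simpa [UniformSpace.ball, dist_comm] using hx
      exact (hcU _ (hG b)).segment_mul_segment G (convex_ball a δ) hab hp hq hr
  refine ⟨Φ, fun p hp => ?_⟩
  filter_upwards [mem_nhdsWithin_of_mem_nhds (Metric.ball_mem_nhds p (half_pos hδ))] with q hpq
  exact hΦ p hp q (by rwa [dist_comm])

lemma isPathCocycle_increment {Φ : C(I, X) → ℝ → K} (hΦ : ∀ γ : C(I, X), (∀ t, γ t ∈ A) →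
    IsLocalPrimitiveOn (alongSegments c (extendPath γ)) (Icc 0 1) (Φ γ)) :
    IsPathCocycle A fun γ => (Φ γ 0)⁻¹ * Φ γ 1 := fun F hF => by
  let π : C(ℝ × ℝ, I × I) := .prodMap ContinuousMap.projIccCM ContinuousMap.projIccCM
  obtain ⟨Ψ, hΨ⟩ := exists_isLocalPrimitiveOn hc (G := F.comp π) (fun _ => hF _)
    isCompact_Icc ((convex_Icc (0 : ℝ × ℝ) 1).starConvex (left_mem_Icc.2 zero_le_one))
  have side (e : C(I, I × I)) {p q : ℝ × ℝ} (hp : p ∈ Icc 0 1) (hq : q ∈ Icc 0 1)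
      (he : ∀ t : ℝ, π (AffineMap.lineMap p q t) = e (ContinuousMap.projIccCM t)) :
      (Φ (F.comp e) 0)⁻¹ * Φ (F.comp e) 1 = (Ψ p)⁻¹ * Ψ q :=
    (hΦ (F.comp e) fun _ => hF _).increment_eq_of_segment hΨ (convex_Icc 0 1) hp hq
      fun t => congrArg F (he t)
  have h₀ : (0 : ℝ × ℝ) ∈ Icc 0 1 := left_mem_Icc.2 zero_le_one
  have h₁ : ((1, 1) : ℝ × ℝ) ∈ Icc 0 1 := right_mem_Icc.2 zero_le_one
  have h₁₀ : ((1, 0) : ℝ × ℝ) ∈ Icc 0 1 := by simp [Prod.le_def]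
  have bottom := side (horizontalEdge 0) h₀ h₁₀ fun t => by
    simp [π, horizontalEdge, ContinuousMap.projIccCM, AffineMap.lineMap_apply]
  have right := side (verticalEdge 1) h₁₀ h₁ fun t => by
    simp [π, verticalEdge, ContinuousMap.projIccCM, AffineMap.lineMap_apply]
  have diagonal := side diagonalEdge h₀ h₁ fun t => by
    simp [π, diagonalEdge, ContinuousMap.projIccCM, AffineMap.lineMap_apply]
  beta_reduce
  rw [bottom, right, diagonal, mul_assoc, mul_inv_cancel_left]

lemma exists_isPathCocycle_of_locally :
    ∃ d : C(I, X) → K, IsPathCocycle A d ∧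
      ∀ U, IsPathCocycle U c → ∀ γ : C(I, X), (∀ t, γ t ∈ A) → (∀ t, γ t ∈ U) → d γ = c γ := by
  have h₀ : StarConvex ℝ 0 (Icc (0 : ℝ) 1) :=
    (convex_Icc _ _).starConvex (left_mem_Icc.2 zero_le_one)
  choose! Φ hΦ using fun (γ : C(I, X)) (hγ : ∀ t, γ t ∈ A) =>
    exists_isLocalPrimitiveOn hc (G := extendPath γ) (fun _ => hγ _) isCompact_Icc h₀
  refine ⟨fun γ => (Φ γ 0)⁻¹ * Φ γ 1, isPathCocycle_increment hc hΦ,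
    fun U hU γ hγA hγU => (hU.eq_increment hγU (hΦ γ hγA)).symm⟩

end Existence

section Union

variable (hA : ∀ x ∈ A, A ∈ 𝓝[A ∪ B] x) (hB : ∀ x ∈ B, B ∈ 𝓝[A ∪ B] x)
include hA hB

lemma IsPathCocycle.eq_of_eq_of_union (hc : IsPathCocycle (A ∪ B) c) (hd : IsPathCocycle (A ∪ B) d)
    (hcdA : ∀ γ : C(I, X), (∀ t, γ t ∈ A) → c γ = d γ)
    (hcdB : ∀ γ : C(I, X), (∀ t, γ t ∈ B) → c γ = d γ)
    {γ : C(I, X)} (hγ : ∀ t, γ t ∈ A ∪ B) : c γ = d γ :=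
  hc.eq_of_locally_eq hd (fun x hx => hx.elim (fun hx => ⟨A, hA x hx, hcdA⟩)
    fun hx => ⟨B, hB x hx, hcdB⟩) hγ

lemma exists_isPathCocycle_union {a b : C(I, X) → K} (ha : IsPathCocycle A a)
    (hb : IsPathCocycle B b) (hab : ∀ γ : C(I, X), (∀ t, γ t ∈ A ∩ B) → a γ = b γ) :
    ∃ d : C(I, X) → K, IsPathCocycle (A ∪ B) d ∧
      (∀ γ : C(I, X), (∀ t, γ t ∈ A) → d γ = a γ) ∧
      (∀ γ : C(I, X), (∀ t, γ t ∈ B) → d γ = b γ) := by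
  classical
  let c (γ : C(I, X)) : K := if ∀ t, γ t ∈ A then a γ else b γ
  have hca (γ : C(I, X)) (hγ : ∀ t, γ t ∈ A) : c γ = a γ := if_pos hγ
  have hcb (γ : C(I, X)) (hγ : ∀ t, γ t ∈ B) : c γ = b γ :=
    ite_eq_right_iff.2 fun hγA => hab γ fun t => ⟨hγA t, hγ t⟩
  have hcA := ha.congr hca
  have hcB := hb.congr hcb
  obtain ⟨d, hd, hdc⟩ := exists_isPathCocycle_of_locally (A := A ∪ B) (c := c) fun x hx =>
    hx.elim (fun hx => ⟨A, hA x hx, hcA⟩) fun hx => ⟨B, hB x hx, hcB⟩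
  exact ⟨d, hd, fun γ hγ => (hdc A hcA γ (fun t => .inl (hγ t)) hγ).trans (hca γ hγ),
    fun γ hγ => (hdc B hcB γ (fun t => .inr (hγ t)) hγ).trans (hcb γ hγ)⟩

end Union

end Gluing

section TrivialCocycles

variable {X Y Z E : Type u} [TopologicalSpace X] [TopologicalSpace Y] [TopologicalSpace Z]
  [NormedAddCommGroup E] [NormedSpace ℝ E] {A B : Set X}

/-- Every path cocycle on `A` is a coboundary: the cohomological substitute for all path components
of `A` being simply connected. -/
def HasTrivialCocycles (A : Set X) : Prop :=
  ∀ (K : Type u) [Group K] (c : C(I, X) → K), IsPathCocycle A c →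
    ∃ f : X → K, ∀ γ : C(I, X), (∀ t, γ t ∈ A) → c γ = coboundary f γ

/-- Path cocycles on `A` lift along surjections of groups: the cohomological substitute for all path
components of `A` having projective, hence free, fundamental group. -/
def HasLiftingCocycles (A : Set X) : Prop :=
  ∀ (K H : Type u) [Group K] [Group H] (p : K →* H), Function.Surjective p →
    ∀ c : C(I, X) → H, IsPathCocycle A c →
      ∃ d : C(I, X) → K, IsPathCocycle A d ∧ ∀ γ : C(I, X), (∀ t, γ t ∈ A) → p (d γ) = c γ

lemma HasTrivialCocycles.hasLiftingCocycles (hA : HasTrivialCocycles A) :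
    HasLiftingCocycles A := fun K H _ _ p hp c hc => by
  obtain ⟨f, hf⟩ := hA H c hc
  refine ⟨coboundary (Function.surjInv hp ∘ f), isPathCocycle_coboundary A _, fun γ hγ => ?_⟩
  simp [hf γ hγ, coboundary, Function.surjInv_eq hp]

lemma hasTrivialCocycles_singleton (x : X) : HasTrivialCocycles {x} := fun K _ c hc => by
  refine ⟨1, fun γ hγ => ?_⟩
  have hγx : γ = .const I x := ContinuousMap.ext hγ
  simp [coboundary, hγx, hc.const (mem_singleton x)]

lemma mul_inv_eq_mul_inv_of_inv_mul_eq {K : Type*} [Group K] {a b x y : K}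
    (h : a⁻¹ * b = x⁻¹ * y) : x * a⁻¹ = y * b⁻¹ := by
  rw [inv_mul_eq_iff_eq_mul] at h
  rw [h]
  group

lemma exists_extension_of_joinedIn {K : Type*} [Nonempty K] {S : Set X} {φ : X → K}
    (hφ : ∀ x ∈ S, ∀ y ∈ S, JoinedIn B x y → φ x = φ y) (hSB : S ⊆ B) :
    ∃ k : X → K, (∀ x y, JoinedIn B x y → k x = k y) ∧ ∀ x ∈ S, k x = φ x := by
  classical
  let k (x : X) : K := if h : ∃ y ∈ S, JoinedIn B x y then φ h.choose else Classical.arbitrary K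
  have hk (x y : X) (hy : y ∈ S) (hxy : JoinedIn B x y) : k x = φ y := by
    have h : ∃ y ∈ S, JoinedIn B x y := ⟨y, hy, hxy⟩
    rw [show k x = φ h.choose from dif_pos h]
    exact hφ _ h.choose_spec.1 _ hy (h.choose_spec.2.symm.trans hxy)
  refine ⟨k, fun x y hxy => ?_, fun x hx => hk x x hx (.refl (hSB hx))⟩
  by_cases h : ∃ z ∈ S, JoinedIn B y z
  · obtain ⟨z, hz, hyz⟩ := h
    rw [hk x z hz (hxy.trans hyz), hk y z hz hyz]
  · rw [show k y = Classical.arbitrary K from dif_neg h,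
      show k x = Classical.arbitrary K from
        dif_neg fun ⟨z, hz, hxz⟩ => h ⟨z, hz, hxy.symm.trans hxz⟩]

lemma eq_of_forall_eventually_eq {W : Type*} {κ : X → W}
    (hκ : ∀ x ∈ A, ∀ᶠ y in 𝓝[A] x, κ y = κ x) {γ : C(I, X)} (hγ : ∀ t, γ t ∈ A) (s t : I) :
    κ (γ s) = κ (γ t) := by
  have hlc : IsLocallyConstant (κ ∘ γ) := (IsLocallyConstant.iff_eventually_eq _).2 fun t =>
    preimage_mem_nhds_of_mem_nhdsWithin γ.continuous hγ (hκ _ (hγ t))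
  exact hlc.apply_eq_of_preconnectedSpace s t

namespace HasTrivialCocycles

lemma of_homotopy {B : Set Z} (hB : HasTrivialCocycles B) {f : C(X, Z)} {g : C(Z, X)}
    (hf : MapsTo f A B) (hg : MapsTo g B A) (h : (g.comp f).Homotopy (.id X))
    (hA : ∀ t, ∀ x ∈ A, h (t, x) ∈ A) : HasTrivialCocycles A := fun K _ c hc => by
  obtain ⟨φ, hφ⟩ := hB K _ ((hc.comp g).mono hg)
  let track (x : X) : C(I, X) := h.toContinuousMap.comp ((ContinuousMap.id I).prodMk (.const I x))
  refine ⟨fun x => φ (f x) * c (track x), fun γ hγ => ?_⟩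
  let F : C(I × I, X) := h.toContinuousMap.comp (.prodMk .snd (γ.comp .fst))
  have bottom : F.comp (horizontalEdge 0) = g.comp (f.comp γ) := by
    ext t; simp [F, horizontalEdge]
  have top : F.comp (horizontalEdge 1) = γ := by
    ext t; simp [F, horizontalEdge]
  have side (s : I) : F.comp (verticalEdge s) = track (γ s) := by
    ext t; simp [F, verticalEdge, track]
  have key := hc.square (F := F) fun z => hA _ _ (hγ _)
  rw [bottom, top, side, side, hφ (f.comp γ) fun t => hf (hγ t)] at key
  rw [eq_inv_mul_of_mul_eq key.symm]
  simp [coboundary, mul_assoc]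

lemma of_starConvex {p : E} {A : Set E} (hA : StarConvex ℝ p A) : HasTrivialCocycles A := by
  obtain rfl | hne := A.eq_empty_or_nonempty
  · exact fun K _ c _ => ⟨1, fun γ hγ => (hγ 0).elim⟩
  · exact (hasTrivialCocycles_singleton p).of_homotopy (f := .const E p) (g := .id E)
      (fun _ _ => rfl) (fun _ hx => hx ▸ hA.mem hne) (.affine _ _) fun t _ hx =>
        hA.segment_subset hx (lineMap_mem_segment ℝ _ _ t.2)

lemma of_convex {A : Set E} (hA : Convex ℝ A) : HasTrivialCocycles A := by
  obtain rfl | ⟨p, hp⟩ := A.eq_empty_or_nonempty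
  · exact of_starConvex (starConvex_empty 0)
  · exact of_starConvex (hA.starConvex hp)

lemma of_starConvex_fibers {A : Set (E × Z)} {B : Set Z} (hB : HasTrivialCocycles B)
    (hAB : MapsTo Prod.snd A B) (center : C(Z, E)) (hcenter : ∀ z ∈ B, (center z, z) ∈ A)
    (hA : ∀ z ∈ B, StarConvex ℝ (center z) {x | (x, z) ∈ A}) : HasTrivialCocycles A := by
  let toBase : C(E × Z, Z) := .snd
  let h : (((center.prodMk (.id Z)).comp toBase)).Homotopy (.id (E × Z)) :=
    { toFun := fun q => (AffineMap.lineMap (center q.2.2) q.2.1 (q.1 : ℝ), q.2.2)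
      map_zero_left := fun q => by simp [toBase]
      map_one_left := fun q => by simp }
  exact hB.of_homotopy hAB (fun z hz => hcenter z hz) h fun t _ hx =>
    (hA _ (hAB hx)).segment_subset hx (lineMap_mem_segment ℝ _ _ t.2)

lemma of_fibers {W : Type*} (κ : X → W) (hκ : ∀ x ∈ A, ∀ᶠ y in 𝓝[A] x, κ y = κ x)
    (hA : ∀ w, HasTrivialCocycles {x ∈ A | κ x = w}) : HasTrivialCocycles A := fun K _ c hc => by
  choose f hf using fun w => hA w K c (hc.mono (sep_subset _ _))
  refine ⟨fun x => f (κ x) x, fun γ hγ => ?_⟩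
  have hconst (t : I) : κ (γ t) = κ (γ 0) := eq_of_forall_eventually_eq hκ hγ t 0
  simpa [coboundary, hconst 1] using hf (κ (γ 0)) γ fun t => ⟨hγ t, hconst t⟩

lemma range_of_isEmbedding (hA : HasTrivialCocycles A) {j : A → Y} (hj : IsEmbedding j) :
    HasTrivialCocycles (range j) := fun K _ c hc => by
  classical
  let push (γ : C(I, X)) (hγ : ∀ t, γ t ∈ A) : C(I, Y) :=
    ⟨fun t => j ⟨γ t, hγ t⟩, hj.continuous.comp (by fun_prop)⟩
  let c' (γ : C(I, X)) : K := if hγ : ∀ t, γ t ∈ A then c (push γ hγ) else 1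
  have hc' : IsPathCocycle A c' := fun F hF => by
    let jF : C(I × I, Y) := ⟨fun z => j ⟨F z, hF z⟩, hj.continuous.comp (by fun_prop)⟩
    simp only [c', ContinuousMap.comp_apply, hF, implies_true, dite_true]
    exact hc jF fun z => mem_range_self _
  obtain ⟨f, hf⟩ := hA K c' hc'
  refine ⟨Function.extend j (f ∘ Subtype.val) 1, fun γ hγ => ?_⟩
  let e : A ≃ₜ range j := hj.toHomeomorph
  let lift : C(I, X) := ⟨fun t => e.symm ⟨γ t, hγ t⟩, by fun_prop⟩
  have hlift (t : I) : lift t ∈ A := (e.symm ⟨γ t, hγ t⟩).2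
  have hjlift (t : I) : j ⟨lift t, hlift t⟩ = γ t :=
    congrArg Subtype.val (e.apply_symm_apply ⟨γ t, hγ t⟩)
  have hpush : push lift hlift = γ := ContinuousMap.ext hjlift
  have key := hf lift hlift
  simp only [c', hlift, implies_true, dite_true, hpush] at key
  rw [key, coboundary, coboundary, ← hjlift 0, ← hjlift 1, hj.injective.extend_apply,
    hj.injective.extend_apply]
  rfl

lemma union (hA' : HasTrivialCocycles A) (hB' : HasTrivialCocycles B)
    (hA : ∀ x ∈ A, A ∈ 𝓝[A ∪ B] x) (hB : ∀ x ∈ B, B ∈ 𝓝[A ∪ B] x)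
    (hAB : ∀ x ∈ A ∩ B, ∀ y ∈ A ∩ B, JoinedIn B x y → JoinedIn (A ∩ B) x y) :
    HasTrivialCocycles (A ∪ B) := fun K _ c hc => by
  classical
  obtain ⟨f, hf⟩ := hA' K c (hc.mono subset_union_left)
  obtain ⟨g, hg⟩ := hB' K c (hc.mono subset_union_right)
  have hfg : ∀ x ∈ A ∩ B, ∀ y ∈ A ∩ B, JoinedIn B x y → f x * (g x)⁻¹ = f y * (g y)⁻¹ :=
    fun x hx y hy hxy => by
      obtain ⟨γ, hγ⟩ := hAB x hx y hy hxy
      have key := (hf γ fun t => (hγ t).1).symm.trans (hg γ fun t => (hγ t).2)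
      have ends (φ : X → K) : coboundary φ γ.toContinuousMap = (φ x)⁻¹ * φ y :=
        congrArg₂ (fun u v => (φ u)⁻¹ * φ v) γ.source γ.target
      exact mul_inv_eq_mul_inv_of_inv_mul_eq (by rw [← ends, ← ends]; exact key.symm)
  obtain ⟨k, hk, hkfg⟩ := exists_extension_of_joinedIn hfg inter_subset_right
  let F (x : X) : K := if x ∈ A then f x else k x * g x
  have hFA (x : X) (hx : x ∈ A) : F x = f x := if_pos hx
  have hFB (x : X) (hx : x ∈ B) : F x = k x * g x :=
    ite_eq_right_iff.2 fun hxA => by simp [hkfg x ⟨hxA, hx⟩]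
  refine ⟨F, fun γ hγ => hc.eq_of_eq_of_union hA hB (isPathCocycle_coboundary _ _)
    (fun γ hγ => ?_) (fun γ hγ => ?_) hγ⟩
  · rw [hf γ hγ, coboundary, coboundary, hFA _ (hγ 0), hFA _ (hγ 1)]
  · have hjoin : JoinedIn B (γ 0) (γ 1) := ⟨⟨γ, rfl, rfl⟩, hγ⟩
    rw [hg γ hγ, coboundary, coboundary, hFB _ (hγ 0), hFB _ (hγ 1), hk _ _ hjoin]
    group

end HasTrivialCocycles

lemma HasLiftingCocycles.union (hA' : HasLiftingCocycles A) (hB' : HasLiftingCocycles B)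
    (hA : ∀ x ∈ A, A ∈ 𝓝[A ∪ B] x) (hB : ∀ x ∈ B, B ∈ 𝓝[A ∪ B] x)
    (hAB : HasTrivialCocycles (A ∩ B)) : HasLiftingCocycles (A ∪ B) :=
  fun K H _ _ p hp c hc => by
  obtain ⟨a, ha, hac⟩ := hA' K H p hp c (hc.mono subset_union_left)
  obtain ⟨b, hb, hbc⟩ := hB' K H p hp c (hc.mono subset_union_right)
  obtain ⟨f, hf⟩ := hAB K a (ha.mono inter_subset_left)
  obtain ⟨g, hg⟩ := hAB K b (hb.mono inter_subset_right)
  let n (x : X) : K := Function.surjInv hp (p (g x) * (p (f x))⁻¹)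
  let k (x : X) : K := (g x)⁻¹ * n x * f x
  have hpk (x : X) : p (k x) = 1 := by simp [k, n, Function.surjInv_eq hp]
  have hn (γ : C(I, X)) (hγ : ∀ t, γ t ∈ A ∩ B) : n (γ 0) = n (γ 1) := by
    have hpfg : p (coboundary f γ) = p (coboundary g γ) := by
      rw [← hf γ hγ, ← hg γ hγ, hac γ fun t => (hγ t).1, hbc γ fun t => (hγ t).2]
    simp only [coboundary, map_mul, map_inv] at hpfg
    exact congrArg (Function.surjInv hp) (mul_inv_eq_mul_inv_of_inv_mul_eq hpfg)
  obtain ⟨d, hd, hda, hdb⟩ := exists_isPathCocycle_union hA hB ha (hb.gauge k) fun γ hγ => by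
    rw [hf γ hγ, hg γ hγ]
    simp only [coboundary, k, hn γ hγ]
    group
  refine ⟨d, hd, fun γ hγ => (hd.map_hom p).eq_of_eq_of_union hA hB hc (fun γ hγ => ?_)
    (fun γ hγ => ?_) hγ⟩
  · simp [hda γ hγ, hac γ hγ]
  · simp [hdb γ hγ, hbc γ hγ, hpk]

end TrivialCocycles

section Freeness

variable {X : Type u} [TopologicalSpace X] {K : Type*} [Group K] {d : C(I, X) → K}

namespace IsPathCocycle

lemma eq_of_homotopic (hd : IsPathCocycle univ d) {x y : X} {p q : Path x y}
    (h : p.Homotopic q) : d p.toContinuousMap = d q.toContinuousMap := by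
  obtain ⟨F⟩ := h
  have key := hd.square (F := F.toContinuousMap) fun _ => mem_univ _
  have bottom : F.toContinuousMap.comp (horizontalEdge 0) = .const I x := by
    ext t; simp [horizontalEdge]
  have top : F.toContinuousMap.comp (horizontalEdge 1) = .const I y := by
    ext t; simp [horizontalEdge]
  have left : F.toContinuousMap.comp (verticalEdge 0) = p.toContinuousMap := by
    ext t; simp [verticalEdge]
  have right : F.toContinuousMap.comp (verticalEdge 1) = q.toContinuousMap := by
    ext t; simp [verticalEdge]
  simpa [bottom, top, left, right, hd.const (mem_univ _)] using key.symm

lemma trans (hd : IsPathCocycle univ d) {x y z : X} (p : Path x y) (q : Path y z) :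
    d (p.trans q).toContinuousMap = d p.toContinuousMap * d q.toContinuousMap := by
  let F : C(I × I, X) := ⟨fun w => (p.trans q).extend ((w.1 + w.2) / 2), by fun_prop⟩
  have bottom : F.comp (horizontalEdge 0) = p.toContinuousMap := by
    ext t
    have ht : (t : ℝ) / 2 ≤ 1 / 2 := by linarith [t.2.2]
    simp [F, horizontalEdge, Path.extend_trans_of_le_half _ _ ht, mul_div_cancel₀]
  have right : F.comp (verticalEdge 1) = q.toContinuousMap := by
    ext t
    have ht : 1 / 2 ≤ (1 + (t : ℝ)) / 2 := by linarith [t.2.1]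
    simp [F, verticalEdge, Path.extend_trans_of_half_le _ _ ht, mul_div_cancel₀]
  have diagonal : F.comp diagonalEdge = (p.trans q).toContinuousMap := by
    ext t
    simp [F, diagonalEdge]
  rw [← bottom, ← right, ← diagonal, hd F fun _ => mem_univ _]

/-- The monodromy of a path cocycle. The inverse makes it a homomorphism, since the product `p * q`
in `FundamentalGroup` is the concatenation of `q` followed by `p`. -/
noncomputable def monodromy (hd : IsPathCocycle univ d) (x : X) : FundamentalGroup X x →* K :=
  MonoidHom.mk'
    (Quotient.lift (fun p : Path x x => (d p.toContinuousMap)⁻¹)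
      fun _ _ h => congrArg (·⁻¹) (hd.eq_of_homotopic h))
    (Quotient.ind₂ fun p q =>
      (congrArg (·⁻¹) (hd.trans q p)).trans (mul_inv_rev _ _))

lemma monodromy_mk (hd : IsPathCocycle univ d) {x : X} (p : Path x x) :
    hd.monodromy x (Path.Homotopic.Quotient.mk p) = (d p.toContinuousMap)⁻¹ := rfl

end IsPathCocycle

/-- The class of the loop at `x` obtained from `q : y ⟶ z` by adding fixed paths from `x` to the
two endpoints; by convention `1` if these are not joined to `x`. -/
noncomputable def closeUp (x : X) {y z : X} (q : Path.Homotopic.Quotient y z) :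
    FundamentalGroup X x :=
  open Classical in
  if h : Joined x y ∧ Joined x z then
    ((Path.Homotopic.Quotient.mk h.1.somePath).trans q).trans
      (Path.Homotopic.Quotient.mk h.2.somePath).symm
  else 1

lemma closeUp_trans (x : X) {y z w : X} (q : Path.Homotopic.Quotient y z)
    (r : Path.Homotopic.Quotient z w) :
    closeUp x (q.trans r) = closeUp x r * closeUp x q := by
  obtain ⟨p, -⟩ := Path.Homotopic.Quotient.mk_surjective q
  obtain ⟨s, -⟩ := Path.Homotopic.Quotient.mk_surjective r
  have hyz : Joined y z := ⟨p⟩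
  have hzw : Joined z w := ⟨s⟩
  by_cases hy : Joined x y
  · have hz := hy.trans hyz
    have hw := hz.trans hzw
    rw [closeUp, closeUp, closeUp, dif_pos ⟨hy, hw⟩, dif_pos ⟨hz, hw⟩, dif_pos ⟨hy, hz⟩,
      FundamentalGroup.mul_def]
    simp only [Path.Homotopic.Quotient.trans_assoc]
    rw [← Path.Homotopic.Quotient.trans_assoc (Path.Homotopic.Quotient.symm _),
      Path.Homotopic.Quotient.symm_trans, Path.Homotopic.Quotient.refl_trans]
  · have hz : ¬ Joined x z := fun hz => hy (hz.trans hyz.symm)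
    simp [closeUp, hy, hz]

lemma closeUp_injective {x : X} {q r : FundamentalGroup X x} (h : closeUp x q = closeUp x r) :
    q = r := by
  let t : FundamentalGroup X x := Path.Homotopic.Quotient.mk (Joined.refl x).somePath
  have hconj (q : FundamentalGroup X x) : closeUp x q = t⁻¹ * (q * t) :=
    dif_pos ⟨.refl x, .refl x⟩
  exact mul_right_cancel (mul_left_cancel ((hconj q).symm.trans (h.trans (hconj r))))

/-- The universal path cocycle, whose monodromy at `x` is an inner automorphism. -/
noncomputable def tautologicalCocycle (x : X) (γ : C(I, X)) : FundamentalGroup X x :=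
  (closeUp x (Path.Homotopic.Quotient.mk ⟨γ, rfl, rfl⟩))⁻¹

lemma tautologicalCocycle_path (x : X) {y z : X} (p : Path y z) :
    tautologicalCocycle x p.toContinuousMap = (closeUp x (.mk p))⁻¹ := by
  rcases p with ⟨γ, rfl, rfl⟩
  rfl

lemma isPathCocycle_tautologicalCocycle (x : X) :
    IsPathCocycle univ (tautologicalCocycle x) := fun F _ => by
  have : ContractibleSpace I := (convex_Icc (0 : ℝ) 1).contractibleSpace ⟨0, by simp⟩
  let bottom : Path ((0, 0) : I × I) (1, 0) := ⟨horizontalEdge 0, rfl, rfl⟩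
  let right : Path ((1, 0) : I × I) (1, 1) := ⟨verticalEdge 1, rfl, rfl⟩
  let diagonal : Path ((0, 0) : I × I) (1, 1) := ⟨diagonalEdge, rfl, rfl⟩
  have h := (SimplyConnectedSpace.paths_homotopic (bottom.trans right) diagonal).map F
  rw [Path.map_trans] at h
  calc tautologicalCocycle x (bottom.map F.continuous).toContinuousMap *
        tautologicalCocycle x (right.map F.continuous).toContinuousMap
      = tautologicalCocycle x (diagonal.map F.continuous).toContinuousMap := by
        rw [tautologicalCocycle_path, tautologicalCocycle_path, tautologicalCocycle_path,
          ← mul_inv_rev, ← closeUp_trans, ← Path.Homotopic.Quotient.mk_trans,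
          Path.Homotopic.Quotient.eq.2 h]

theorem HasLiftingCocycles.isFreeGroup_fundamentalGroup (h : HasLiftingCocycles (univ : Set X))
    (x : X) : IsFreeGroup (FundamentalGroup X x) := by
  obtain ⟨d, hd, hlift⟩ := h (FreeGroup (FundamentalGroup X x)) (FundamentalGroup X x)
    (FreeGroup.lift id) (fun g => ⟨.of g, FreeGroup.lift_apply_of⟩) (tautologicalCocycle x)
    (isPathCocycle_tautologicalCocycle x)
  have hmono (q : FundamentalGroup X x) :
      FreeGroup.lift id (hd.monodromy x q) = closeUp x q := by
    induction q using Path.Homotopic.Quotient.ind with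
    | mk p =>
      rw [hd.monodromy_mk, map_inv, hlift _ fun _ => mem_univ _, tautologicalCocycle_path,
        inv_inv]
  have hinj : Function.Injective (hd.monodromy x) := fun q r hqr =>
    closeUp_injective <| by rw [← hmono, ← hmono, hqr]
  exact IsFreeGroup.ofMulEquiv (MonoidHom.ofInjective hinj).symm

end Freeness

section Forests

variable {V : Type*} {G : SimpleGraph V}

lemma isAcyclic_induce_of_mem_every_cycle {v₀ : V}
    (hv₀ : ∀ (u : V) (c : G.Walk u u), c.IsCycle → v₀ ∈ c.support) {s : Set V} (hs : v₀ ∉ s) :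
    (G.induce s).IsAcyclic := fun u c hc => by
  have hmem := hv₀ _ _ (hc.map (f := (SimpleGraph.Embedding.induce s).toHom)
    Subtype.val_injective)
  rw [SimpleGraph.Walk.support_map, List.mem_map] at hmem
  obtain ⟨w, -, rfl⟩ := hmem
  exact hs w.2

-- The end of a longest path is a leaf.
lemma exists_subsingleton_adj_of_isAcyclic [Finite V] [Nonempty V] (hG : G.IsAcyclic) :
    ∃ v, ∀ w w', G.Adj v w → G.Adj v w' → w = w' := by
  obtain ⟨u, v, p, hp, hmax⟩ := SimpleGraph.Walk.exists_isPath_forall_isPath_length_le_length G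
  have hsupp (w : V) (hw : G.Adj v w) : w ∈ p.support := by
    by_contra hwp
    have := hmax _ _ _ (hp.concat hwp hw)
    simp at this
  exact ⟨v, fun w w' hw hw' => (hG.eq_penultimate_of_adj_end hp hw (hsupp w hw)).trans
    (hG.eq_penultimate_of_adj_end hp hw' (hsupp w' hw')).symm⟩

lemma acyclic_induction [DecidableEq V] {P : Finset V → Prop} (h₀ : P ∅)
    (hstep : ∀ (v : V) (T : Finset V), v ∉ T →
      (∀ w ∈ T, ∀ w' ∈ T, G.Adj v w → G.Adj v w' → w = w') → P T → P (insert v T))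
    (T : Finset V) (hT : (G.induce (T : Set V)).IsAcyclic) : P T := by
  induction T using Finset.strongInduction with
  | H T ih =>
    obtain rfl | hne := T.eq_empty_or_nonempty
    · exact h₀
    have : Nonempty (T : Set V) := hne.to_subtype
    obtain ⟨⟨v, hv⟩, hleaf⟩ := exists_subsingleton_adj_of_isAcyclic hT
    have hsub : ((T.erase v : Finset V) : Set V) ⊆ T := by simp
    rw [← Finset.insert_erase hv]
    refine hstep v _ (T.notMem_erase v) (fun w hw w' hw' hvw hvw' => ?_) <|
      ih _ (T.erase_ssubset hv) <|
        hT.embedding (SimpleGraph.induceHomOfLE _ hsub)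
    exact congrArg Subtype.val (hleaf ⟨w, hsub hw⟩ ⟨w', hsub hw'⟩ hvw hvw')

end Forests

section Realization

open Function

lemma mem_nhdsWithin_of_isOpen_preimage {X : Type*} [TopologicalSpace X] {s t D : Set X}
    (hD : IsOpen ((↑) ⁻¹' D : Set s)) (hts : t ⊆ s) {x : X} (hxt : x ∈ t) (hx : x ∈ D) :
    D ∈ 𝓝[t] x :=
  nhdsWithin_mono x hts <| preimage_coe_mem_nhds_subtype.1 <| hD.mem_nhds (x := ⟨x, hts hxt⟩) hx

lemma eq_one_iff_support_subset {ι : Type*} [Fintype ι] {y : ι → ℝ} (hy : y ∈ stdSimplex ℝ ι)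
    {m : ι} : y m = 1 ↔ support y ⊆ {m} := by
  classical
  rw [support_subset_iff']
  have hsum : y m + ∑ n ∈ Finset.univ.erase m, y n = 1 :=
    (Finset.add_sum_erase _ y (Finset.mem_univ m)).trans hy.2
  rw [← sub_eq_zero, ← hsum, sub_add_cancel_left, neg_eq_zero,
    Finset.sum_eq_zero_iff_of_nonneg fun n _ => hy.1 n]
  simp

variable {k : ℕ} {G : SimpleGraph (Fin k)} {T : Set (Fin k)} {v : Fin k} {y z : Fin k → ℝ}

lemma add_eq_one_of_support_subset_pair {i j : Fin k} (hij : i ≠ j)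
    (hy : y ∈ stdSimplex ℝ (Fin k)) (hsupp : support y ⊆ {i, j}) : y i + y j = 1 := by
  rw [← hy.2, ← Finset.sum_pair hij]
  refine Finset.sum_subset (Finset.subset_univ _) fun n _ hn => ?_
  by_contra hn'
  exact hn (by simpa using hsupp hn')

lemma mem_graphRealization_iff : y ∈ graphRealization G ↔
    y ∈ stdSimplex ℝ (Fin k) ∧ ∃ i j, G.Adj i j ∧ support y ⊆ {i, j} := by
  simp only [graphRealization, mem_iUnion, exists_prop]
  constructor
  · rintro ⟨i, j, hij, hy⟩
    refine ⟨segment_single_subset_stdSimplex ℝ i j hy, i, j, hij, fun n hn => ?_⟩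
    obtain ⟨a, b, -, -, -, rfl⟩ := hy
    by_contra hn'
    obtain ⟨hni, hnj⟩ := not_or.1 hn'
    exact hn (by simp [hni, mt mem_singleton_iff.2 hnj])
  · rintro ⟨hy, i, j, hij, hsupp⟩
    refine ⟨i, j, hij, y i, y j, hy.1 i, hy.1 j,
      add_eq_one_of_support_subset_pair hij.ne hy hsupp, funext fun n => ?_⟩
    by_cases hni : n = i
    · subst hni
      simp [hij.ne]
    by_cases hnj : n = j
    · subst hnj
      simp [hni]
    · rw [support_subset_iff'.1 hsupp n (by simp [hni, hnj])]
      simp [hni, hnj]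

lemma adj_and_support_eq_pair (hy : y ∈ graphRealization G) {i j : Fin k} (hij : i ≠ j)
    (hi : y i ≠ 0) (hj : y j ≠ 0) : G.Adj i j ∧ support y = {i, j} := by
  obtain ⟨-, a, b, hab, hsupp⟩ := mem_graphRealization_iff.1 hy
  have hpair : ({i, j} : Set (Fin k)) ⊆ support y := pair_subset hi hj
  obtain ⟨rfl | rfl, rfl | rfl⟩ := And.intro (hsupp hi) (hsupp hj)
  all_goals first
    | exact absurd rfl hij
    | exact ⟨hab, hsupp.antisymm hpair⟩
    | exact ⟨hab.symm, (hsupp.trans (pair_comm _ _).subset).antisymm hpair⟩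

lemma mem_graphRealization_of_support_subset (hy : y ∈ graphRealization G)
    (hz : z ∈ stdSimplex ℝ (Fin k)) (hzy : support z ⊆ support y) : z ∈ graphRealization G := by
  obtain ⟨-, i, j, hij, hsupp⟩ := mem_graphRealization_iff.1 hy
  exact mem_graphRealization_iff.2 ⟨hz, i, j, hij, hzy.trans hsupp⟩

lemma eq_of_apply_eq_one (hy : y ∈ stdSimplex ℝ (Fin k))
    (hz : z ∈ stdSimplex ℝ (Fin k)) (hyv : y v = 1) (hzv : z v = 1) : y = z := by
  funext n
  obtain rfl | hn := eq_or_ne n v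
  · rw [hyv, hzv]
  · rw [support_subset_iff'.1 ((eq_one_iff_support_subset hy).1 hyv) n hn,
      support_subset_iff'.1 ((eq_one_iff_support_subset hz).1 hzv) n hn]

lemma exists_ne_apply_ne_zero (hy : y ∈ stdSimplex ℝ (Fin k)) {a : Fin k} (ha : y a ≠ 1) :
    ∃ b, b ≠ a ∧ y b ≠ 0 := by
  by_contra! h
  exact ha ((eq_one_iff_support_subset hy).2 (support_subset_iff'.2 fun b hb => h b hb))

lemma exists_apply_ne_zero (hy : y ∈ stdSimplex ℝ (Fin k)) : ∃ a, y a ≠ 0 := by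
  by_contra! h
  exact zero_ne_one ((Finset.sum_eq_zero fun a _ => h a).symm.trans hy.2)

lemma exists_adj_support_eq_pair (hy : y ∈ graphRealization G) (hv : y v ≠ 0) (hv' : y v ≠ 1) :
    ∃ w, G.Adj v w ∧ support y = {v, w} := by
  obtain ⟨w, hwv, hw⟩ := exists_ne_apply_ne_zero (mem_graphRealization_iff.1 hy).1 hv'
  exact ⟨w, adj_and_support_eq_pair hy hwv.symm hv hw⟩

variable (G T) in
/-- The geometric realization of `G` with the vertices outside `T` removed. -/
def puncturedRealization : Set (Fin k → ℝ) :=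
  {y ∈ graphRealization G | ∀ m ∉ T, y m ≠ 1}

lemma mem_stdSimplex_of_mem_puncturedRealization (hy : y ∈ puncturedRealization G T) :
    y ∈ stdSimplex ℝ (Fin k) :=
  (mem_graphRealization_iff.1 hy.1).1

lemma apply_lt_one_of_mem_puncturedRealization (hv : v ∉ T)
    (hz : z ∈ puncturedRealization G T) : z v < 1 :=
  (mem_Icc_of_mem_stdSimplex (mem_stdSimplex_of_mem_puncturedRealization hz) v).2.lt_of_ne
    (hz.2 v hv)

lemma mem_puncturedRealization_of_mem_insert (hy : y ∈ puncturedRealization G (insert v T))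
    (hyv : y v ≠ 1) : y ∈ puncturedRealization G T := by
  refine ⟨hy.1, fun m hm => ?_⟩
  obtain rfl | hmv := eq_or_ne m v
  · exact hyv
  · exact hy.2 m (by simp [hmv, hm])

lemma mem_puncturedRealization_of_support_eq (hy : y ∈ puncturedRealization G T)
    (hz : z ∈ stdSimplex ℝ (Fin k)) (hzy : support z = support y) :
    z ∈ puncturedRealization G T := by
  refine ⟨mem_graphRealization_of_support_subset hy.1 hz hzy.subset, fun m hm hzm => hy.2 m hm ?_⟩
  rw [eq_one_iff_support_subset hz, hzy] at hzm
  exact (eq_one_iff_support_subset (mem_stdSimplex_of_mem_puncturedRealization hy)).2 hzm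

lemma eventually_ne_zero {B : Set (Fin k → ℝ)} {n : Fin k} (hn : y n ≠ 0) :
    ∀ᶠ z in 𝓝[B] y, z n ≠ 0 :=
  ((continuous_apply n).continuousAt.eventually_ne hn).filter_mono nhdsWithin_le_nhds

lemma eventually_support_eq (hy : y ∈ graphRealization G) {i : Fin k} (hi : y i ≠ 0)
    (hi' : y i ≠ 1) : ∀ᶠ z in 𝓝[graphRealization G] y, support z = support y := by
  obtain ⟨j, hji, hj⟩ := exists_ne_apply_ne_zero (mem_graphRealization_iff.1 hy).1 hi'
  filter_upwards [eventually_ne_zero hi, eventually_ne_zero hj, self_mem_nhdsWithin]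
    with z hzi hzj hz
  rw [(adj_and_support_eq_pair hz hji.symm hzi hzj).2,
    (adj_and_support_eq_pair hy hji.symm hi hj).2]

lemma eventually_support_eq_of_mem_puncturedRealization_empty
    (hy : y ∈ puncturedRealization G ∅) :
    ∀ᶠ z in 𝓝[graphRealization G] y, support z = support y := by
  obtain ⟨i, hi⟩ := exists_apply_ne_zero (mem_stdSimplex_of_mem_puncturedRealization hy)
  exact eventually_support_eq hy.1 hi (hy.2 i (notMem_empty i))

lemma convex_puncturedRealization_inter_support_eq (e : Set (Fin k)) :
    Convex ℝ {y ∈ puncturedRealization G T | support y = e} := by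
  rw [convex_iff_forall_pos]
  rintro y ⟨hy, rfl⟩ z ⟨hz, hzy⟩ a b ha hb hab
  have hy' := mem_stdSimplex_of_mem_puncturedRealization hy
  have hz' := mem_stdSimplex_of_mem_puncturedRealization hz
  have hsupp : support (a • y + b • z) = support y := by
    ext n
    have hyz : z n = 0 ↔ y n = 0 := not_iff_not.1 (Set.ext_iff.1 hzy n)
    have := mul_nonneg ha.le (hy'.1 n)
    have := mul_nonneg hb.le (hz'.1 n)
    simp [add_eq_zero_iff_of_nonneg, *, ha.ne', hb.ne']
  exact ⟨mem_puncturedRealization_of_support_eq hy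
    (convex_stdSimplex ℝ _ hy' hz' ha.le hb.le hab) hsupp, hsupp⟩

lemma support_lineMap_single {w : Fin k} (hvw : v ≠ w) {t : ℝ} (ht : t ∈ Ioo (0 : ℝ) 1) :
    support (AffineMap.lineMap (Pi.single w 1) (Pi.single v 1) t : Fin k → ℝ) = {v, w} := by
  ext n
  simp only [AffineMap.lineMap_apply_module, mem_support, Pi.add_apply, Pi.smul_apply,
    Pi.single_apply, smul_eq_mul, mul_ite, mul_one, mul_zero, mem_insert_iff, mem_singleton_iff]
  have := ht.1.ne'
  have := (sub_pos.2 ht.2).ne'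
  by_cases hnv : n = v <;> by_cases hnw : n = w <;> simp_all

lemma lineMap_single_mem_puncturedRealization {w : Fin k} (hy : y ∈ puncturedRealization G T)
    (hyw : support y = {v, w}) (hvw : v ≠ w) {t : ℝ} (ht : t ∈ Ioo (0 : ℝ) 1) :
    AffineMap.lineMap (Pi.single w 1 : Fin k → ℝ) (Pi.single v 1) t ∈ puncturedRealization G T :=
  mem_puncturedRealization_of_support_eq hy (segment_single_subset_stdSimplex ℝ w v
    (lineMap_mem_segment ℝ _ _ (Ioo_subset_Icc_self ht)))
    ((support_lineMap_single hvw ht).trans hyw.symm)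

lemma hasTrivialCocycles_puncturedRealization_empty :
    HasTrivialCocycles (puncturedRealization G ∅) :=
  .of_fibers support
    (fun _ hy => (eventually_support_eq_of_mem_puncturedRealization_empty hy).filter_mono
      (nhdsWithin_mono _ (sep_subset _ _)))
    fun e => .of_convex (convex_puncturedRealization_inter_support_eq e)

lemma starConvex_graphRealization_inter_lt (v : Fin k) {c : ℝ} (hc : 0 ≤ c) :
    StarConvex ℝ (Pi.single v 1) {y ∈ graphRealization G | c < y v} := by
  rintro y ⟨hy, hcy⟩ a b ha hb hab
  have hy' := (mem_graphRealization_iff.1 hy).1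
  refine ⟨mem_graphRealization_of_support_subset hy
    (convex_stdSimplex ℝ _ (single_mem_stdSimplex ℝ v) hy' ha hb hab) fun n hn => ?_, ?_⟩
  · rw [mem_support] at hn ⊢
    contrapose! hn
    have hnv : n ≠ v := fun h => (hc.trans_lt hcy).ne' (h ▸ hn)
    simp [hn, hnv]
  · have := (mem_Icc_of_mem_stdSimplex hy' v).2
    simp only [Pi.add_apply, Pi.smul_apply, Pi.single_eq_same, smul_eq_mul]
    nlinarith

variable (G) in
/-- The open star of the vertex `v` in the geometric realization of `G`. -/
def openStar (v : Fin k) : Set (Fin k → ℝ) :=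
  {y ∈ graphRealization G | 0 < y v}

lemma openStar_union_puncturedRealization (v : Fin k) (T : Set (Fin k)) :
    openStar G v ∪ puncturedRealization G T = puncturedRealization G (insert v T) := by
  ext y
  constructor
  · rintro (⟨hy, hyv⟩ | hy)
    · refine ⟨hy, fun m hm hym => hm (Or.inl ?_)⟩
      exact ((eq_one_iff_support_subset (mem_graphRealization_iff.1 hy).1).1 hym hyv.ne').symm
    · exact ⟨hy.1, fun m hm => hy.2 m (mt Or.inr hm)⟩
  · intro hy
    obtain hyv | hyv := ((mem_stdSimplex_of_mem_puncturedRealization hy).1 v).lt_or_eq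
    · exact Or.inl ⟨hy.1, hyv⟩
    · refine Or.inr ⟨hy.1, fun m hm => ?_⟩
      obtain rfl | hmv := eq_or_ne m v
      · simp [← hyv]
      · exact hy.2 m (by simp [hmv, hm])

lemma eventually_support_eq_pair_iff {i j : Fin k} (hi : i ∉ T) (hj : j ∉ T)
    (hy : y ∈ puncturedRealization G T) :
    ∀ᶠ z in 𝓝[puncturedRealization G T] y, (support z = {i, j}) = (support y = {i, j}) := by
  by_cases h : support y = {i, j}
  · have hyi : y i ≠ 0 := h.superset (mem_insert i {j})
    filter_upwards [(eventually_support_eq hy.1 hyi (hy.2 i hi)).filter_mono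
      (nhdsWithin_mono _ (sep_subset _ _))] with z hz
    rw [hz]
  · have hnot (n m : Fin k) (hm : m ∉ T) (hn : y n = 0) : ¬ support y ⊆ {n, m} := fun hsub =>
      hy.2 m hm <| (eq_one_iff_support_subset (mem_stdSimplex_of_mem_puncturedRealization hy)).2 <|
        (subset_insert_iff_of_notMem (notMem_support.2 hn)).1 hsub
    obtain ⟨b, hb, hbij⟩ : ∃ b ∈ support y, b ∉ ({i, j} : Set (Fin k)) := by
      rw [← not_subset]
      intro hsub
      refine h (hsub.antisymm (pair_subset (fun hyi => hnot i j hj hyi hsub) fun hyj => ?_))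
      exact hnot j i hi hyj (hsub.trans (pair_comm i j).subset)
    filter_upwards [eventually_ne_zero hb] with z hzb
    simp only [h, eq_iff_iff, iff_false]
    exact fun hz => hbij (hz.subset hzb)

lemma support_eq_pair_of_joinedIn {i j : Fin k} (hi : i ∉ T) (hj : j ∉ T)
    (hyz : JoinedIn (puncturedRealization G T) y z) (hy : support y = {i, j}) :
    support z = {i, j} := by
  obtain ⟨γ, hγ⟩ := hyz
  have := eq_of_forall_eventually_eq (γ := (γ : C(I, Fin k → ℝ)))
    (fun _ hx => eventually_support_eq_pair_iff hi hj hx) hγ 0 1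
  simpa [hy] using this

lemma joinedIn_openStar_inter_puncturedRealization (hv : v ∉ T)
    (hleaf : ∀ w ∈ T, ∀ w' ∈ T, G.Adj v w → G.Adj v w' → w = w')
    (hy : y ∈ openStar G v ∩ puncturedRealization G T)
    (hz : z ∈ openStar G v ∩ puncturedRealization G T)
    (hyz : JoinedIn (puncturedRealization G T) y z) :
    JoinedIn (openStar G v ∩ puncturedRealization G T) y z := by
  obtain ⟨w, hadj, hyw⟩ := exists_adj_support_eq_pair hy.1.1 hy.1.2.ne' (hy.2.2 v hv)
  obtain ⟨w', hadj', hzw'⟩ := exists_adj_support_eq_pair hz.1.1 hz.1.2.ne' (hz.2.2 v hv)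
  have hsupp : support z = support y := by
    by_cases hw : w ∈ T
    · by_cases hw' : w' ∈ T
      · rw [hyw, hzw', hleaf w hw w' hw' hadj hadj']
      · rw [hzw', support_eq_pair_of_joinedIn hv hw' hyz.symm hzw']
    · rw [hyw, support_eq_pair_of_joinedIn hv hw hyz hyw]
  have hconv := convex_puncturedRealization_inter_support_eq (G := G) (T := T) (support y)
  refine .of_segment_subset ((hconv.segment_subset ⟨hy.2, rfl⟩ ⟨hz.2, hsupp⟩).trans ?_)
  rintro x ⟨hx, hxy⟩
  have hxv : x v ≠ 0 := mem_support.1 (hxy ▸ hy.1.2.ne')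
  exact ⟨⟨hx.1, ((mem_stdSimplex_of_mem_puncturedRealization hx).1 v).lt_of_ne' hxv⟩, hx⟩

lemma isOpen_preimage_openStar (v : Fin k) :
    IsOpen ((↑) ⁻¹' openStar G v : Set (graphRealization G)) := by
  have : ((↑) ⁻¹' openStar G v : Set (graphRealization G)) = {y | 0 < y.1 v} :=
    ext fun y => and_iff_right y.2
  exact this ▸ isOpen_lt continuous_const ((continuous_apply v).comp continuous_subtype_val)

lemma isOpen_preimage_puncturedRealization (T : Set (Fin k)) :
    IsOpen ((↑) ⁻¹' puncturedRealization G T : Set (graphRealization G)) := by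
  have : ((↑) ⁻¹' puncturedRealization G T : Set (graphRealization G)) =
      ⋂ m ∈ Tᶜ, {y | y.1 m ≠ 1} :=
    ext fun y => by simp [puncturedRealization]
  exact this ▸ (toFinite Tᶜ).isOpen_biInter fun m _ =>
    isOpen_ne.preimage ((continuous_apply m).comp continuous_subtype_val)

lemma hasTrivialCocycles_puncturedRealization {v₀ : Fin k}
    (hv₀ : ∀ (u : Fin k) (c : G.Walk u u), c.IsCycle → v₀ ∈ c.support) {T : Finset (Fin k)}
    (hT : v₀ ∉ T) : HasTrivialCocycles (puncturedRealization G T) := by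
  refine acyclic_induction (P := fun T => HasTrivialCocycles (puncturedRealization G T))
    (by simpa using hasTrivialCocycles_puncturedRealization_empty) (fun v T hv hleaf hT => ?_) T
    (isAcyclic_induce_of_mem_every_cycle hv₀ hT)
  have hstar : HasTrivialCocycles (openStar G v) :=
    .of_starConvex (starConvex_graphRealization_inter_lt v le_rfl)
  have hsub : openStar G v ∪ puncturedRealization G T ⊆ graphRealization G :=
    union_subset (sep_subset _ _) (sep_subset _ _)
  rw [Finset.coe_insert, ← openStar_union_puncturedRealization]
  exact hstar.union hT
    (fun x hx => mem_nhdsWithin_of_isOpen_preimage (isOpen_preimage_openStar v) hsub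
      (Or.inl hx) hx)
    (fun x hx => mem_nhdsWithin_of_isOpen_preimage (isOpen_preimage_puncturedRealization _) hsub
      (Or.inr hx) hx)
    (fun y hy z hz => joinedIn_openStar_inter_puncturedRealization hv hleaf hy hz)

end Realization

section UnorderedPairs

variable {X : Type u} [TopologicalSpace X]

lemma isOpenMap_mk_uconf (n : ℕ) (X : Type*) [TopologicalSpace X] :
    IsOpenMap (Quotient.mk (confSetoid n X)) := fun U hU => by
  let permute (π : Equiv.Perm (Fin n)) (f : Conf n X) : Conf n X :=
    ⟨f.1 ∘ π, f.2.comp π.injective⟩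
  have hpermute (π : Equiv.Perm (Fin n)) : Continuous (permute π) :=
    .subtype_mk ((Pi.continuous_precomp π).comp continuous_subtype_val) fun f =>
      f.2.comp π.injective
  have hpre : Quotient.mk (confSetoid n X) ⁻¹' (Quotient.mk (confSetoid n X) '' U) =
      ⋃ π, permute π ⁻¹' U := by
    ext g
    simp only [mem_preimage, mem_image, mem_iUnion, Quotient.eq]
    constructor
    · rintro ⟨f, hf, π, hπ⟩
      exact ⟨π, by rwa [show permute π g = f from Subtype.ext hπ.symm]⟩
    · rintro ⟨π, hπ⟩
      exact ⟨_, hπ, π, rfl⟩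
  rw [← isQuotientMap_quotient_mk'.isOpen_preimage]
  exact hpre ▸ isOpen_iUnion fun π => hU.preimage (hpermute π)

lemma Conf.continuous_apply {n : ℕ} {X : Type*} [TopologicalSpace X] (i : Fin n) :
    Continuous fun f : Conf n X => f.1 i :=
  (_root_.continuous_apply i).comp continuous_subtype_val

variable {A : Set X} {D D' : Set (X × X)}

/-- The two points of an ordered configuration in `A`, as a pair of points of the ambient space. -/
def Conf.toPair (f : Conf 2 A) : X × X :=
  (f.1 0, f.1 1)

lemma Conf.continuous_toPair : Continuous (Conf.toPair : Conf 2 A → X × X) := by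
  have (i : Fin 2) : Continuous fun f : Conf 2 A => (f.1 i : X) :=
    continuous_subtype_val.comp (Conf.continuous_apply i)
  exact (this 0).prodMk (this 1)

lemma Conf.toPair_mem_offDiag (f : Conf 2 A) : f.toPair ∈ A.offDiag :=
  ⟨(f.1 0).2, (f.1 1).2, fun h => zero_ne_one (f.2 (Subtype.ext h))⟩

lemma mk_uconf_eq_mk_iff {f g : Conf 2 A} :
    Quotient.mk (confSetoid 2 A) f = Quotient.mk (confSetoid 2 A) g ↔
      f.toPair = g.toPair ∨ f.toPair = g.toPair.swap := by
  rw [Quotient.eq]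
  constructor
  · rintro ⟨π, hπ⟩
    have h (i : Fin 2) : f.1 i = g.1 (π i) := congrFun hπ i
    have := π.injective.ne zero_ne_one
    obtain ⟨h0, h1⟩ | ⟨h0, h1⟩ : π 0 = 0 ∧ π 1 = 1 ∨ π 0 = 1 ∧ π 1 = 0 := by omega
    · left; simp [Conf.toPair, h, h0, h1]
    · right; simp [Conf.toPair, h, h0, h1]
  · simp only [Conf.toPair, Prod.swap_prod_mk, Prod.mk.injEq, Subtype.coe_inj]
    rintro (⟨h0, h1⟩ | ⟨h0, h1⟩)
    · exact ⟨1, funext fun i => by fin_cases i <;> simpa⟩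
    · exact ⟨Equiv.swap 0 1, funext fun i => by fin_cases i <;> simpa⟩

variable (A D) in
/-- The two-point configurations in `A` one of whose orderings lies in `D`. -/
def unorderedPairs : Set (UConf 2 A) :=
  Quotient.mk (confSetoid 2 A) '' (Conf.toPair ⁻¹' D)

lemma mk_mem_unorderedPairs_iff {f : Conf 2 A} :
    Quotient.mk (confSetoid 2 A) f ∈ unorderedPairs A D ↔
      f.toPair ∈ D ∨ f.toPair.swap ∈ D := by
  constructor
  · rintro ⟨g, hg, hgf⟩
    obtain h | h := mk_uconf_eq_mk_iff.1 hgf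
    · exact Or.inl (by rwa [mem_preimage, h] at hg)
    · exact Or.inr (by rwa [mem_preimage, h] at hg)
  · rintro (h | h)
    · exact ⟨f, h, rfl⟩
    · refine ⟨⟨f.1 ∘ Equiv.swap 0 1, f.2.comp (Equiv.injective _)⟩, ?_, ?_⟩
      · simpa [Conf.toPair] using h
      · exact mk_uconf_eq_mk_iff.2 (Or.inr (by simp [Conf.toPair]))

lemma isOpen_unorderedPairs (hD : IsOpen (Conf.toPair ⁻¹' D : Set (Conf 2 A))) :
    IsOpen (unorderedPairs A D) :=
  isOpenMap_mk_uconf 2 A _ hD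

lemma unorderedPairs_union :
    unorderedPairs A (D ∪ D') = unorderedPairs A D ∪ unorderedPairs A D' := by
  rw [unorderedPairs, preimage_union, image_union, unorderedPairs, unorderedPairs]

lemma unorderedPairs_inter_prod (B : Set X) :
    unorderedPairs A D ∩ unorderedPairs A (B ×ˢ B) = unorderedPairs A (D ∩ B ×ˢ B) := by
  ext q
  obtain ⟨f, rfl⟩ := Quotient.exists_rep q
  simp only [mem_inter_iff, mk_mem_unorderedPairs_iff, mem_prod, Prod.fst_swap, Prod.snd_swap]
  tauto

lemma hasTrivialCocycles_unorderedPairs (hD : HasTrivialCocycles D)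
    (hDA : D ⊆ A.offDiag) (hasymm : ∀ p ∈ D, p.swap ∉ D)
    (hopen : IsOpen (Conf.toPair ⁻¹' D : Set (Conf 2 A))) :
    HasTrivialCocycles (unorderedPairs A D) := by
  let pairing (p : D) : Conf 2 A :=
    ⟨![⟨p.1.1, (hDA p.2).1⟩, ⟨p.1.2, (hDA p.2).2.1⟩],
      injective_pair_iff_ne.2 (by simpa using (hDA p.2).2.2)⟩
  let j (p : D) : UConf 2 A := Quotient.mk _ (pairing p)
  have hpairing : Continuous pairing := by
    refine .subtype_mk (continuous_pi fun i => ?_) _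
    fin_cases i
    · exact .subtype_mk (continuous_fst.comp continuous_subtype_val) _
    · exact .subtype_mk (continuous_snd.comp continuous_subtype_val) _
  have himage (W : Set (X × X)) : j '' ((↑) ⁻¹' W) = unorderedPairs A (D ∩ W) := by
    ext q
    constructor
    · rintro ⟨p, hp, rfl⟩
      exact ⟨pairing p, ⟨p.2, hp⟩, rfl⟩
    · rintro ⟨f, hf, rfl⟩
      exact ⟨⟨f.toPair, hf.1⟩, hf.2, mk_uconf_eq_mk_iff.2 (Or.inl rfl)⟩
  have hinj : Function.Injective j := fun p q hpq => by
    obtain h | h := mk_uconf_eq_mk_iff.1 hpq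
    · exact Subtype.ext h
    · exact (hasymm q q.2 (h ▸ p.2)).elim
  have hj : IsOpenEmbedding j := by
    refine .of_continuous_injective_isOpenMap (continuous_quotient_mk'.comp hpairing) hinj ?_
    rintro _ ⟨W, hW, rfl⟩
    rw [himage]
    exact isOpen_unorderedPairs (hopen.inter (hW.preimage Conf.continuous_toPair))
  have hrange : range j = unorderedPairs A D := by simpa using himage univ
  exact hrange ▸ hD.range_of_isEmbedding hj.isEmbedding

end UnorderedPairs

section Braids

open Function

variable {k : ℕ} {G : SimpleGraph (Fin k)} {T : Set (Fin k)} {v : Fin k}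

variable (G T) in
/-- The two-point configurations in the realization of `G` avoiding the vertices outside `T`. -/
def puncturedPairs : Set (UConf 2 (graphRealization G)) :=
  unorderedPairs _ (puncturedRealization G T ×ˢ puncturedRealization G T)

variable (G T v) in
/-- The pairs of points of which the second avoids the vertices outside `T` and the first is
closer to the vertex `v`. -/
def closerPairs : Set ((Fin k → ℝ) × (Fin k → ℝ)) :=
  {p | p.1 ∈ graphRealization G ∧ p.2 ∈ puncturedRealization G T ∧ p.2 v < p.1 v}

lemma swap_notMem_closerPairs {p : (Fin k → ℝ) × (Fin k → ℝ)} (hp : p ∈ closerPairs G T v) :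
    p.swap ∉ closerPairs G T v :=
  fun h => lt_asymm hp.2.2 h.2.2

lemma closerPairs_subset_offDiag : closerPairs G T v ⊆ (graphRealization G).offDiag :=
  fun _ hp => ⟨hp.1, hp.2.1.1, fun h => hp.2.2.ne' (congrFun h v)⟩

lemma closerPairs_inter_punctured :
    closerPairs G T v ∩ puncturedRealization G T ×ˢ puncturedRealization G T =
      {p | p.1 ∈ puncturedRealization G T ∧ p.2 ∈ puncturedRealization G T ∧ p.2 v < p.1 v} := by
  ext p
  simp only [closerPairs, mem_inter_iff, mem_ofPred_eq, mem_prod]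
  exact ⟨fun h => ⟨h.2.1, h.2.2, h.1.2.2⟩, fun h => ⟨⟨h.1.1, h.2⟩, h.1, h.2.1⟩⟩

lemma hasTrivialCocycles_closerPairs (hT : HasTrivialCocycles (puncturedRealization G T))
    (hv : v ∉ T) : HasTrivialCocycles (closerPairs G T v) := by
  obtain he | ⟨p₀, hp₀, hp₀', hlt⟩ := (closerPairs G T v).eq_empty_or_nonempty
  · exact he ▸ .of_convex convex_empty
  have hv_mem : Pi.single v 1 ∈ graphRealization G :=
    ((starConvex_graphRealization_inter_lt v
      ((mem_stdSimplex_of_mem_puncturedRealization hp₀').1 v)).mem ⟨p₀.1, hp₀, hlt⟩).1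
  refine .of_starConvex_fibers hT (fun p hp => hp.2.1) (.const _ (Pi.single v 1))
    (fun z hz => ⟨hv_mem, hz, ?_⟩) fun z hz => ?_
  · simpa using apply_lt_one_of_mem_puncturedRealization hv hz
  · have hslice : {x | (x, z) ∈ closerPairs G T v} = {x ∈ graphRealization G | z v < x v} :=
      ext fun x => ⟨fun h => ⟨h.1, h.2.2⟩, fun h => ⟨h.1, hz, h.2⟩⟩
    exact hslice ▸ starConvex_graphRealization_inter_lt v
      ((mem_stdSimplex_of_mem_puncturedRealization hz).1 v)

lemma hasTrivialCocycles_closerPairs_inter_punctured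
    (hT : HasTrivialCocycles (puncturedRealization G T)) (hv : v ∉ T) :
    HasTrivialCocycles
      (closerPairs G T v ∩ puncturedRealization G T ×ˢ puncturedRealization G T) := by
  rw [closerPairs_inter_punctured]
  set C := {p : (Fin k → ℝ) × (Fin k → ℝ) | p.1 ∈ puncturedRealization G T ∧
    p.2 ∈ puncturedRealization G T ∧ p.2 v < p.1 v}
  have hpos (p) (hp : p ∈ C) : p.1 v ≠ 0 :=
    (((mem_stdSimplex_of_mem_puncturedRealization hp.2.1).1 v).trans_lt hp.2.2).ne'
  refine .of_fibers (fun p => support p.1) (fun p hp => ?_) fun e => ?_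
  · have := eventually_support_eq hp.1.1 (hpos p hp) (hp.1.2 v hv)
    exact (continuous_fst.continuousWithinAt.tendsto_nhdsWithin fun q hq => hq.1.1).eventually this
  obtain he | ⟨p₀, hp₀, rfl⟩ := {p ∈ C | support p.1 = e}.eq_empty_or_nonempty
  · exact he ▸ .of_convex convex_empty
  obtain ⟨w, hvw, hp₀w⟩ := exists_adj_support_eq_pair hp₀.1.1 (hpos p₀ hp₀) (hp₀.1.2 v hv)
  let center : C(Fin k → ℝ, Fin k → ℝ) :=
    ⟨fun z => AffineMap.lineMap (Pi.single w 1) (Pi.single v 1) ((1 + z v) / 2), by fun_prop⟩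
  have hcenter (z) (hz : z ∈ puncturedRealization G T) :
      (center z, z) ∈ {p ∈ C | support p.1 = support p₀.1} := by
    have hzv := (mem_stdSimplex_of_mem_puncturedRealization hz).1 v
    have hzv' := apply_lt_one_of_mem_puncturedRealization hv hz
    have ht : (1 + z v) / 2 ∈ Ioo (0 : ℝ) 1 := ⟨by linarith, by linarith⟩
    refine ⟨⟨lineMap_single_mem_puncturedRealization hp₀.1 hp₀w hvw.ne ht, hz, ?_⟩,
      (support_lineMap_single hvw.ne ht).trans hp₀w.symm⟩
    have : center z v = (1 + z v) / 2 := by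
      simp [center, AffineMap.lineMap_apply_module, hvw.ne]
    change z v < center z v
    linarith
  refine .of_starConvex_fibers hT (fun p hp => hp.1.2.1) center hcenter fun z hz => ?_
  have hslice : {x | (x, z) ∈ {p ∈ C | support p.1 = support p₀.1}} =
      {x ∈ puncturedRealization G T | support x = support p₀.1} ∩ {x | z v < x v} :=
    ext fun x => ⟨fun h => ⟨⟨h.1.1, h.2⟩, h.1.2.2⟩, fun h => ⟨⟨h.1.1, hz, h.2⟩, h.1.2⟩⟩
  refine Convex.starConvex ?_ (hcenter z hz)
  exact hslice ▸ (convex_puncturedRealization_inter_support_eq _).inter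
    (convex_halfSpace_gt (LinearMap.proj v).isLinear _)

lemma mk_mem_closerPairs_of_apply_eq_one {y z : Fin k → ℝ} (hv : v ∉ T)
    (hy : y ∈ puncturedRealization G (insert v T)) (hz : z ∈ puncturedRealization G (insert v T))
    (hyz : y ≠ z) (hyv : y v = 1) : (y, z) ∈ closerPairs G T v := by
  have hzT := mem_puncturedRealization_of_mem_insert hz fun hzv => hyz <|
    eq_of_apply_eq_one (mem_stdSimplex_of_mem_puncturedRealization hy)
      (mem_stdSimplex_of_mem_puncturedRealization hz) hyv hzv
  exact ⟨hy.1, hzT, (apply_lt_one_of_mem_puncturedRealization hv hzT).trans_eq hyv.symm⟩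

lemma puncturedPairs_insert (hv : v ∉ T) :
    puncturedPairs G (insert v T) =
      unorderedPairs _ (closerPairs G T v) ∪ puncturedPairs G T := by
  have hunion := openStar_union_puncturedRealization (G := G) v T
  have hsub : puncturedRealization G T ⊆ puncturedRealization G (insert v T) :=
    hunion ▸ subset_union_right
  rw [puncturedPairs, puncturedPairs, ← unorderedPairs_union]
  refine Subset.antisymm ?_ (image_mono (preimage_mono ?_))
  · rintro _ ⟨f, ⟨hy, hz⟩, rfl⟩
    obtain ⟨-, -, hne⟩ := f.toPair_mem_offDiag
    rw [mk_mem_unorderedPairs_iff]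
    by_cases hyv : f.toPair.1 v = 1
    · exact Or.inl (Or.inl (mk_mem_closerPairs_of_apply_eq_one hv hy hz hne hyv))
    by_cases hzv : f.toPair.2 v = 1
    · exact Or.inr (Or.inl (mk_mem_closerPairs_of_apply_eq_one hv hz hy hne.symm hzv))
    exact Or.inl (Or.inr ⟨mem_puncturedRealization_of_mem_insert hy hyv,
      mem_puncturedRealization_of_mem_insert hz hzv⟩)
  · refine union_subset (fun p ⟨hp, hp', hlt⟩ => ⟨?_, hsub hp'⟩) (prod_mono hsub hsub)
    have hpos := ((mem_stdSimplex_of_mem_puncturedRealization hp').1 v).trans_lt hlt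
    exact hunion ▸ Or.inl ⟨hp, hpos⟩

lemma isOpen_toPair_preimage_prod :
    IsOpen (Conf.toPair ⁻¹' (puncturedRealization G T ×ˢ puncturedRealization G T) :
      Set (Conf 2 (graphRealization G))) :=
  ((isOpen_preimage_puncturedRealization T).preimage (Conf.continuous_apply 0)).inter
    ((isOpen_preimage_puncturedRealization T).preimage (Conf.continuous_apply 1))

lemma isOpen_toPair_preimage_closerPairs :
    IsOpen (Conf.toPair ⁻¹' closerPairs G T v : Set (Conf 2 (graphRealization G))) := by
  have hlt : IsOpen {f : Conf 2 (graphRealization G) | f.toPair.2 v < f.toPair.1 v} :=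
    isOpen_lt ((continuous_apply v).comp (continuous_snd.comp Conf.continuous_toPair))
      ((continuous_apply v).comp (continuous_fst.comp Conf.continuous_toPair))
  convert ((isOpen_preimage_puncturedRealization T).preimage (Conf.continuous_apply 1)).inter hlt
    using 1
  exact ext fun f => and_iff_right (f.1 0).2

lemma hasLiftingCocycles_puncturedPairs_insert
    (hT : HasTrivialCocycles (puncturedRealization G T)) (hv : v ∉ T)
    (hlift : HasLiftingCocycles (puncturedPairs G T)) :
    HasLiftingCocycles (puncturedPairs G (insert v T)) := by
  have hcloser := hasTrivialCocycles_unorderedPairs (hasTrivialCocycles_closerPairs hT hv)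
    closerPairs_subset_offDiag (fun _ => swap_notMem_closerPairs)
    isOpen_toPair_preimage_closerPairs
  have hinter := hasTrivialCocycles_unorderedPairs
    (hasTrivialCocycles_closerPairs_inter_punctured hT hv)
    (inter_subset_left.trans closerPairs_subset_offDiag)
    (fun _ hp hp' => swap_notMem_closerPairs hp.1 hp'.1)
    (isOpen_toPair_preimage_closerPairs.inter isOpen_toPair_preimage_prod)
  rw [puncturedPairs_insert hv]
  refine hcloser.hasLiftingCocycles.union hlift (fun q hq => ?_) (fun q hq => ?_) ?_
  · exact mem_nhdsWithin_of_mem_nhds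
      ((isOpen_unorderedPairs isOpen_toPair_preimage_closerPairs).mem_nhds hq)
  · exact mem_nhdsWithin_of_mem_nhds
      ((isOpen_unorderedPairs isOpen_toPair_preimage_prod).mem_nhds hq)
  · rwa [puncturedPairs, unorderedPairs_inter_prod]

/-- A linear coordinate on `ℝ^{Fin k}` which is injective on each edge of a graph realization. -/
noncomputable def edgeCoordinate : (Fin k → ℝ) →ₗ[ℝ] ℝ :=
  ∑ m : Fin k, (m : ℝ) • LinearMap.proj m

lemma edgeCoordinate_eq_of_support_eq_pair {y : Fin k → ℝ} (hy : y ∈ stdSimplex ℝ (Fin k))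
    {i j : Fin k} (hij : i ≠ j) (hsupp : support y = {i, j}) :
    edgeCoordinate y = j + (i - j) * y i := by
  have hsum := add_eq_one_of_support_subset_pair hij hy hsupp.subset
  have : edgeCoordinate y = i * y i + j * y j := by
    simp only [edgeCoordinate, LinearMap.sum_apply, LinearMap.smul_apply, LinearMap.proj_apply,
      smul_eq_mul]
    refine Eq.trans (Finset.sum_subset (Finset.subset_univ _) fun n _ hn => ?_).symm
      (Finset.sum_pair hij)
    rw [support_subset_iff'.1 hsupp.subset n (by simpa using hn), mul_zero]
  rw [this]
  linear_combination (j : ℝ) * hsum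

/-- A sort key totally ordering the points of the open edges of a graph realization: first by the
open edge containing the point, then by its position on that edge. -/
noncomputable def cellKey (y : Fin k → ℝ) : Fin (Nat.card (Set (Fin k))) ×ₗ ℝ :=
  toLex (Finite.equivFin _ (support y), edgeCoordinate y)

lemma cellKey_injOn : InjOn cellKey (puncturedRealization G ∅) := by
  intro y hy z hz hyz
  obtain ⟨hsupp, hcoord⟩ := Prod.mk.inj (toLex.injective hyz)
  replace hsupp := (Finite.equivFin _).injective hsupp
  have hy' := mem_stdSimplex_of_mem_puncturedRealization hy
  have hz' := mem_stdSimplex_of_mem_puncturedRealization hz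
  obtain ⟨i, hi⟩ := exists_apply_ne_zero hy'
  obtain ⟨j, hadj, hyij⟩ := exists_adj_support_eq_pair hy.1 hi (hy.2 i (notMem_empty i))
  have hzij := hsupp ▸ hyij
  have hij : (i : ℝ) - j ≠ 0 := sub_ne_zero.2 (by simpa [Fin.val_inj] using hadj.ne)
  rw [edgeCoordinate_eq_of_support_eq_pair hy' hadj.ne hyij,
    edgeCoordinate_eq_of_support_eq_pair hz' hadj.ne hzij] at hcoord
  have hyzi : y i = z i := mul_left_cancel₀ hij (add_left_cancel hcoord)
  have hyzj : y j = z j := by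
    linarith [add_eq_one_of_support_subset_pair hadj.ne hy' hyij.subset,
      add_eq_one_of_support_subset_pair hadj.ne hz' hzij.subset]
  funext n
  by_cases hn : n ∈ ({i, j} : Set (Fin k))
  · obtain rfl | rfl := hn
    exacts [hyzi, hyzj]
  · rw [support_subset_iff'.1 hyij.subset n hn, support_subset_iff'.1 hzij.subset n hn]

/-- The pairs of points that `cellKey` would order increasingly if their supports were `e` and
`e'`. -/
def precedingPairs (e e' : Set (Fin k)) : Set ((Fin k → ℝ) × (Fin k → ℝ)) :=
  {p | toLex (Finite.equivFin _ e, edgeCoordinate p.1) <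
    toLex (Finite.equivFin _ e', edgeCoordinate p.2)}

lemma precedingPairs_eq (e e' : Set (Fin k)) :
    precedingPairs e e' = univ ∨ precedingPairs e e' = ∅ ∨
      precedingPairs e e' = {p | edgeCoordinate p.1 < edgeCoordinate p.2} := by
  obtain h | h | h := lt_trichotomy (Finite.equivFin _ e) (Finite.equivFin _ e')
  · exact Or.inl (by ext; simp [precedingPairs, Prod.Lex.toLex_lt_toLex, h])
  · exact Or.inr (Or.inr (by ext; simp [precedingPairs, Prod.Lex.toLex_lt_toLex, h]))
  · exact Or.inr (Or.inl (by ext; simp [precedingPairs, Prod.Lex.toLex_lt_toLex, h.le, h.ne']))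

lemma isOpen_precedingPairs (e e' : Set (Fin k)) : IsOpen (precedingPairs e e') := by
  have hcont := (edgeCoordinate (k := k)).continuous_of_finiteDimensional
  obtain h | h | h := precedingPairs_eq e e' <;> rw [h]
  exacts [isOpen_univ, isOpen_empty,
    isOpen_lt (hcont.comp continuous_fst) (hcont.comp continuous_snd)]

lemma convex_precedingPairs (e e' : Set (Fin k)) : Convex ℝ (precedingPairs e e') := by
  obtain h | h | h := precedingPairs_eq e e' <;> rw [h]
  · exact convex_univ
  · exact convex_empty
  · let diff : (Fin k → ℝ) × (Fin k → ℝ) →ₗ[ℝ] ℝ :=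
      edgeCoordinate ∘ₗ .fst ℝ _ _ - edgeCoordinate ∘ₗ .snd ℝ _ _
    have hdiff : {p | edgeCoordinate p.1 < edgeCoordinate p.2} = {p | diff p < 0} := by
      ext; simp [diff, sub_neg]
    exact hdiff ▸ convex_halfSpace_lt diff.isLinear 0

variable (G) in
/-- The pairs of points of open edges in increasing order of `cellKey`. -/
def increasingPairs : Set ((Fin k → ℝ) × (Fin k → ℝ)) :=
  {p ∈ puncturedRealization G ∅ ×ˢ puncturedRealization G ∅ | cellKey p.1 < cellKey p.2}

lemma unorderedPairs_increasingPairs :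
    unorderedPairs _ (increasingPairs G) = puncturedPairs G ∅ := by
  refine Subset.antisymm (image_mono (preimage_mono (sep_subset _ _))) ?_
  rintro _ ⟨f, hf, rfl⟩
  obtain ⟨-, -, hne⟩ := f.toPair_mem_offDiag
  rw [mk_mem_unorderedPairs_iff]
  exact (cellKey_injOn.ne hf.1 hf.2 hne).lt_or_gt.imp (fun h => ⟨hf, h⟩) fun h => ⟨hf.symm, h⟩

lemma increasingPairs_subset_offDiag : increasingPairs G ⊆ (graphRealization G).offDiag :=
  fun _ hp => ⟨hp.1.1.1, hp.1.2.1, fun h => hp.2.ne (congrArg cellKey h)⟩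

lemma eventually_support_prod_eq {p : (Fin k → ℝ) × (Fin k → ℝ)}
    (hp : p ∈ puncturedRealization G ∅ ×ˢ puncturedRealization G ∅) :
    ∀ᶠ q in 𝓝[graphRealization G ×ˢ graphRealization G] p,
      (support q.1, support q.2) = (support p.1, support p.2) := by
  rw [nhdsWithin_prod_eq]
  filter_upwards [(eventually_support_eq_of_mem_puncturedRealization_empty hp.1).prod_mk
    (eventually_support_eq_of_mem_puncturedRealization_empty hp.2)] with q hq
  rw [hq.1, hq.2]

lemma hasTrivialCocycles_increasingPairs : HasTrivialCocycles (increasingPairs G) := by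
  refine .of_fibers (fun p => (support p.1, support p.2)) (fun p hp => ?_) fun ⟨e, e'⟩ => ?_
  · exact (eventually_support_prod_eq hp.1).filter_mono (nhdsWithin_mono _
      (increasingPairs_subset_offDiag.trans (offDiag_subset_prod _)))
  · have hfiber : {p ∈ increasingPairs G | (support p.1, support p.2) = (e, e')} =
        {y ∈ puncturedRealization G ∅ | support y = e} ×ˢ
          {y ∈ puncturedRealization G ∅ | support y = e'} ∩ precedingPairs e e' := by
      ext p
      constructor
      · rintro ⟨⟨⟨hp, hp'⟩, hlt⟩, heq⟩
        obtain ⟨rfl, rfl⟩ := Prod.mk.inj heq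
        exact ⟨⟨⟨hp, rfl⟩, hp', rfl⟩, hlt⟩
      · rintro ⟨⟨⟨hp, rfl⟩, hp', rfl⟩, hlt⟩
        exact ⟨⟨⟨hp, hp'⟩, hlt⟩, rfl⟩
    exact hfiber ▸ .of_convex (((convex_puncturedRealization_inter_support_eq e).prod
      (convex_puncturedRealization_inter_support_eq e')).inter (convex_precedingPairs e e'))

lemma isOpen_toPair_preimage_increasingPairs :
    IsOpen (Conf.toPair ⁻¹' increasingPairs G : Set (Conf 2 (graphRealization G))) := by
  rw [isOpen_iff_eventually]
  intro f hf
  have htendsto : Filter.Tendsto Conf.toPair (𝓝 f)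
      (𝓝[graphRealization G ×ˢ graphRealization G] f.toPair) :=
    tendsto_nhdsWithin_iff.2 ⟨Conf.continuous_toPair.continuousAt,
      .of_forall fun g => ⟨(g.1 0).2, (g.1 1).2⟩⟩
  filter_upwards [htendsto.eventually (eventually_support_prod_eq hf.1),
    isOpen_toPair_preimage_prod.mem_nhds hf.1,
    ((isOpen_precedingPairs _ _).preimage Conf.continuous_toPair).mem_nhds hf.2] with g hg hgT hlt
  obtain ⟨h, h'⟩ := Prod.mk.inj hg
  rw [← h, ← h'] at hlt
  exact ⟨hgT, hlt⟩

lemma hasLiftingCocycles_puncturedPairs_empty : HasLiftingCocycles (puncturedPairs G ∅) := by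
  rw [← unorderedPairs_increasingPairs]
  exact (hasTrivialCocycles_unorderedPairs hasTrivialCocycles_increasingPairs
    increasingPairs_subset_offDiag (fun p hp hp' => lt_asymm hp.2 hp'.2)
    isOpen_toPair_preimage_increasingPairs).hasLiftingCocycles

lemma hasLiftingCocycles_puncturedPairs {v₀ : Fin k}
    (hv₀ : ∀ (u : Fin k) (c : G.Walk u u), c.IsCycle → v₀ ∈ c.support) (T : Finset (Fin k))
    (hT : v₀ ∉ T) : HasLiftingCocycles (puncturedPairs G T) := by
  induction T using Finset.induction_on with
  | empty => simpa using hasLiftingCocycles_puncturedPairs_empty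
  | insert v T hv ih =>
    have hT' : v₀ ∉ T := fun h => hT (Finset.mem_insert_of_mem h)
    rw [Finset.coe_insert]
    exact hasLiftingCocycles_puncturedPairs_insert
      (hasTrivialCocycles_puncturedRealization hv₀ hT') hv (ih hT')

lemma puncturedPairs_univ : puncturedPairs G univ = univ := by
  refine eq_univ_of_forall fun q => ?_
  obtain ⟨f, rfl⟩ := Quotient.exists_rep q
  exact mk_mem_unorderedPairs_iff.2 <| Or.inl
    ⟨⟨(f.1 0).2, fun m hm => (hm trivial).elim⟩, (f.1 1).2, fun m hm => (hm trivial).elim⟩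

end Braids

theorem braid_group_two_free_of_vertex_on_every_cycle_general {k : ℕ}
    (G : SimpleGraph (Fin k)) (v₀ : Fin k)
    (hv₀ : ∀ (u : Fin k) (c : G.Walk u u), c.IsCycle → v₀ ∈ c.support)
    (x : UConf 2 (graphRealization G)) :
    IsFreeGroup (FundamentalGroup (UConf 2 (graphRealization G)) x) := by
  set T : Finset (Fin k) := Finset.univ.erase v₀
  have hT : v₀ ∉ T := Finset.notMem_erase v₀ _
  have hlift := hasLiftingCocycles_puncturedPairs_insert
    (hasTrivialCocycles_puncturedRealization hv₀ hT) hT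
    (hasLiftingCocycles_puncturedPairs hv₀ T hT)
  have huniv : insert v₀ (T : Set (Fin k)) = univ := by simp [T]
  rw [huniv, puncturedPairs_univ] at hlift
  exact hlift.isFreeGroup_fundamentalGroup x

/-- If some vertex `v₀` of a finite connected graph `G` (with at least one edge) lies on
every simple loop of `G`, then the 2-strand graph braid group `B₂(|G|)` is free. -/
theorem braid_group_two_free_of_vertex_on_every_cycle {k : ℕ}
    (G : SimpleGraph (Fin k)) (hconn : G.Connected) (hedge : G.edgeSet.Nonempty)
    (v₀ : Fin k) (hv₀ : ∀ (u : Fin k) (c : G.Walk u u), c.IsCycle → v₀ ∈ c.support)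
    (x : UConf 2 (graphRealization G)) :
    IsFreeGroup (FundamentalGroup (UConf 2 (graphRealization G)) x) :=
  braid_group_two_free_of_vertex_on_every_cycle_general G v₀ hv₀ x
end
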